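/- Let n ≥ 3 and let G be a connected well-covered unicyclic graph of order 2n. Then C_n* ⪯ G and G ⪯ U_n*. -/

import Mathlib

/-!
A unicyclic graph of order `2n` contains at least `n - 1/2`, hence `n` independent vertices, and a
well-covered graph with so large an independent set has a perfect matching such that all neighbours
of one end of a matching edge are adjacent to all neighbours of the other end. A matching edge
without a pendant end therefore lies on the cycle of `G`, which has length four, and there is at
most one such edge. Moving an edge of the four-cycle gives this matching edge a pendant end and does
not change the independence polynomial. So `G` has the independence polynomial of `H*` for some
unicyclic `H` of order `n`.

As `I(H*, x) = (1 + x)ⁿ I(H, x / (1 + x))`, it remains to compare `I(H, -t)` with `I(C_n, -t)` and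
`I(U_n, -t)` for `t ≥ 0` such that the polynomials in question are positive at `-t` on all induced
subgraphs. The deletion recursion `I(H, -t) = I(H - v, -t) - t I(H - N[v], -t)` makes them
log-submodular as functions of the vertex set. Log-submodularity bounds the ratio
`I(H, -t) / I(H - v, -t)` for `H` connected by the corresponding ratio for a path, and for `H`
containing a cycle by the one for a cycle, so `I(H, -t) ≤ I(C_n, -t)`. In the other direction, `H`
is built up vertex by vertex. The new vertex `v` costs `t I(H - N[v], -t)`, which is largest when
`H - N[v]` has no edges.
-/

open Polynomial SimpleGraph

/-- A finset of vertices is independent: pairwise nonadjacent. -/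
def IsIndepFinset {V : Type*} (G : SimpleGraph V) (s : Finset V) : Prop :=
  ∀ u ∈ s, ∀ v ∈ s, ¬ G.Adj u v

open Classical in
/-- The independence polynomial of a finite graph, with real coefficients. -/
noncomputable def indepPoly {V : Type*} [Fintype V] (G : SimpleGraph V) : Polynomial ℝ :=
  ∑ s : Finset V, if IsIndepFinset G s then (X : Polynomial ℝ) ^ s.card else 0

/-- `xi G` : the largest real root of the independence polynomial of `G`. -/
noncomputable def xi {V : Type*} [Fintype V] (G : SimpleGraph V) : ℝ :=
  sSup {x : ℝ | (indepPoly G).eval x = 0}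

/-- `Pre H G` (`H ⪯ G`) : `I(H,x) ≥ I(G,x)` for all `x ∈ [ξ(G), 0]`. -/
def Pre {V W : Type*} [Fintype V] [Fintype W] (H : SimpleGraph W) (G : SimpleGraph V) : Prop :=
  ∀ x ∈ Set.Icc (xi G) 0, (indepPoly G).eval x ≤ (indepPoly H).eval x

/-- `SPre H G` (`H ≺ G`). -/
def SPre {V W : Type*} [Fintype V] [Fintype W] (H : SimpleGraph W) (G : SimpleGraph V) : Prop :=
  Pre H G ∧ indepPoly H ≠ indepPoly G

open Classical in
/-- A graph is well-covered if all maximal independent sets have the same size. -/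
def WellCovered {V : Type*} (G : SimpleGraph V) : Prop :=
  ∀ s t : Finset V,
    IsIndepFinset G s → (∀ v ∉ s, ¬ IsIndepFinset G (insert v s)) →
    IsIndepFinset G t → (∀ v ∉ t, ¬ IsIndepFinset G (insert v t)) →
    s.card = t.card

/-- A connected unicyclic graph: connected with as many edges as vertices. -/
def Unicyclic {V : Type*} [Fintype V] (G : SimpleGraph V) : Prop :=
  G.Connected ∧ G.edgeSet.ncard = Fintype.card V

/-- The graph star (corona with `K₁`) of `G`: each vertex `inl v` gets a pendant
vertex `inr v`. -/
def corona {V : Type*} (G : SimpleGraph V) : SimpleGraph (V ⊕ V) :=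
  SimpleGraph.fromRel (fun a b =>
    match a, b with
    | Sum.inl u, Sum.inl v => G.Adj u v
    | Sum.inl u, Sum.inr v => u = v
    | _, _ => False)

/-- `Ugraph n` (`U_n`, `n ≥ 3`): a triangle `0,1,2` with `n - 3` pendant vertices attached
to vertex `0`. -/
def Ugraph (n : ℕ) : SimpleGraph (Fin n) :=
  SimpleGraph.fromRel (fun i j => i.val = 0 ∨ (i.val = 1 ∧ j.val = 2))

/-- `Dgraph n` (`D_n`, `n ≥ 4`): a path `0,1,...,n-1` plus the chord `{0,2}`, i.e. a
triangle with a path on `n - 3` vertices attached. -/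
def Dgraph (n : ℕ) : SimpleGraph (Fin n) :=
  SimpleGraph.fromRel (fun i j => j.val = i.val + 1 ∨ (i.val = 0 ∧ j.val = 2))

/-- `starGraph n` (`S_n = K_{1,n-1}`): vertex `0` adjacent to all other vertices. -/
def starGraph (n : ℕ) : SimpleGraph (Fin n) :=
  SimpleGraph.fromRel (fun i _ => i.val = 0)

/-- `Mgraph n` (`M_n`, odd `n ≥ 5`): a triangle `0,1,2` with `(n-3)/2` paths of length two
attached at vertex `0`; the middle vertices are the odd indices `3,5,...,n-2` and the leaf
attached to middle vertex `i` is `i + 1`. -/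
def Mgraph (n : ℕ) : SimpleGraph (Fin n) :=
  SimpleGraph.fromRel (fun i j =>
    (i.val = 0 ∧ (j.val ≤ 2 ∨ j.val % 2 = 1)) ∨ (i.val = 1 ∧ j.val = 2) ∨
    (i.val % 2 = 1 ∧ 3 ≤ i.val ∧ j.val = i.val + 1))

/-- `SPgraph g k ℓ` (`G(g,k,ℓ)`, for `g ∈ {3,5}` and `k + ℓ ≥ 1`): a cycle on the vertices
`0,...,g-1`, a copy of `P_k*` on the vertices `g,...,g+2k-1` (path vertices at even offsets,
each followed by its pendant vertex) joined to the cycle vertex `0` by an edge to the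
path end `g`, and a copy of `P_ℓ*` on the vertices `g+2k,...,g+2k+2ℓ-1` joined to the cycle
vertex `2` by an edge to the path end `g+2k`. -/
def SPgraph (g k ℓ : ℕ) : SimpleGraph (Fin (g + 2*k + 2*ℓ)) :=
  SimpleGraph.fromRel (fun i j =>
    (i.val < g ∧ j.val < g ∧ (j.val = i.val + 1 ∨ (i.val = 0 ∧ j.val = g - 1))) ∨
    (i.val = 0 ∧ 0 < k ∧ j.val = g) ∨
    (g ≤ i.val ∧ i.val < g + 2*k ∧ (i.val - g) % 2 = 0 ∧
      (j.val = i.val + 1 ∨ (j.val = i.val + 2 ∧ j.val < g + 2*k))) ∨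
    (i.val = 2 ∧ 0 < ℓ ∧ j.val = g + 2*k) ∨
    (g + 2*k ≤ i.val ∧ (i.val - (g + 2*k)) % 2 = 0 ∧
      (j.val = i.val + 1 ∨ j.val = i.val + 2)))

/-- `Gtree n` (`G_{2n}`, `n ≥ 5`): the tree on `2n` vertices with path `v_1 … v_n` at
indices `0,…,n-1`, `z_1` at index `n`, `y_1, y_2` at `n+1, n+2`, `x_1, x_2` at `n+3, n+4`
(with `v_3 z_1`, `v_3 y_1`, `y_1 y_2`, `v_5 x_1`, `x_1 x_2` edges), and pendant vertices
`w_j` at index `n + j - 1` attached to `v_j` for `6 ≤ j ≤ n`. -/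
def Gtree (n : ℕ) : SimpleGraph (Fin (2*n)) :=
  SimpleGraph.fromRel (fun a b =>
    (a.val + 1 = b.val ∧ b.val < n) ∨
    (a.val = 2 ∧ (b.val = n ∨ b.val = n + 1)) ∨
    (a.val = n + 1 ∧ b.val = n + 2) ∨
    (a.val = 4 ∧ b.val = n + 3) ∨
    (a.val = n + 3 ∧ b.val = n + 4) ∨
    (5 ≤ a.val ∧ a.val < n ∧ b.val = n + a.val))

/-! ### Independence polynomials of induced subgraphs -/

open Classical in
/-- The value at `-t` of the independence polynomial of the subgraph of `G` induced on `S`. The sign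
is chosen so that the deletion recursion reads `Z(S ∪ {v}) = Z(S) - t Z(S ∖ N(v))`. -/
noncomputable def indepEval {V : Type*} (G : SimpleGraph V) (t : ℝ) (S : Finset V) : ℝ :=
  ∑ A ∈ S.powerset, if IsIndepFinset G A then (-t) ^ A.card else 0

open Classical in
/-- The vertices of `S` that are not adjacent to `v`; this contains `v` itself when `v ∈ S`. -/
noncomputable def nonNbrs {V : Type*} (G : SimpleGraph V) (v : V) (S : Finset V) : Finset V :=
  S.filter fun w => ¬ G.Adj v w

/-- At `-t` the independence polynomials of all induced subgraphs of `G` are positive. For `t ≥ 0`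
this says that `-t` lies to the right of the root `ξ(G)`. -/
def IndepPos {V : Type*} (G : SimpleGraph V) (t : ℝ) : Prop :=
  ∀ S : Finset V, 0 < indepEval G t S

section IndepEval

variable {V : Type*} {G : SimpleGraph V} {t : ℝ}

lemma mem_nonNbrs {v w : V} {S : Finset V} : w ∈ nonNbrs G v S ↔ w ∈ S ∧ ¬ G.Adj v w := by
  classical
  simp only [nonNbrs, Finset.mem_filter]

lemma nonNbrs_subset (G : SimpleGraph V) (v : V) (S : Finset V) : nonNbrs G v S ⊆ S :=
  fun _ h => (mem_nonNbrs.1 h).1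

lemma nonNbrs_eq_self {v : V} {S : Finset V} (h : ∀ w ∈ S, ¬ G.Adj v w) : nonNbrs G v S = S :=
  (nonNbrs_subset G v S).antisymm fun w hw => mem_nonNbrs.2 ⟨hw, h w hw⟩

lemma nonNbrs_subset_erase [DecidableEq V] {v w : V} (h : G.Adj v w) (S : Finset V) :
    nonNbrs G v S ⊆ S.erase w := by
  intro y hy
  rw [mem_nonNbrs] at hy
  exact Finset.mem_erase.2 ⟨by rintro rfl; exact hy.2 h, hy.1⟩

lemma IsIndepFinset.mono {A B : Finset V} (hB : IsIndepFinset G B) (h : A ⊆ B) :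
    IsIndepFinset G A :=
  fun u hu v hv => hB u (h hu) v (h hv)

lemma isIndepFinset_insert [DecidableEq V] {A : Finset V} {v : V} :
    IsIndepFinset G (insert v A) ↔ IsIndepFinset G A ∧ ∀ w ∈ A, ¬ G.Adj v w := by
  simp only [IsIndepFinset, Finset.forall_mem_insert, G.irrefl, not_false_eq_true, true_and,
    forall_and]
  simp only [G.adj_comm _ v]
  tauto

lemma eval_indepPoly [Fintype V] (G : SimpleGraph V) (t : ℝ) :
    (indepPoly G).eval (-t) = indepEval G t Finset.univ := by
  classical
  simp only [indepPoly, indepEval, Finset.powerset_univ, Polynomial.eval_finsetSum]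
  refine Finset.sum_congr rfl fun s _ => ?_
  split_ifs <;> simp

lemma indepEval_empty (G : SimpleGraph V) (t : ℝ) : indepEval G t ∅ = 1 := by
  simp [indepEval, IsIndepFinset]

lemma indepEval_zero (G : SimpleGraph V) (S : Finset V) : indepEval G 0 S = 1 := by
  classical
  rw [indepEval, Finset.sum_eq_single ∅]
  · simp [IsIndepFinset]
  · intro A _ hA
    have : A.card ≠ 0 := Finset.card_ne_zero.2 (Finset.nonempty_iff_ne_empty.2 hA)
    simp [this]
  · simp

lemma continuous_indepEval (G : SimpleGraph V) (S : Finset V) :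
    Continuous fun t => indepEval G t S := by
  classical
  unfold indepEval
  refine continuous_finsetSum _ fun A _ => ?_
  split_ifs <;> fun_prop

lemma indepEval_insert [DecidableEq V] (G : SimpleGraph V) (t : ℝ) {v : V} {S : Finset V}
    (hv : v ∉ S) :
    indepEval G t (insert v S) = indepEval G t S - t * indepEval G t (nonNbrs G v S) := by
  classical
  unfold indepEval
  rw [Finset.sum_powerset_insert hv, sub_eq_add_neg, ← neg_mul, Finset.mul_sum]
  congr 1
  symm
  refine Finset.sum_subset_zero_on_sdiff (Finset.powerset_mono.2 (nonNbrs_subset G v S)) ?_ ?_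
  · intro A hA
    rw [Finset.mem_sdiff, Finset.mem_powerset, Finset.mem_powerset] at hA
    rw [if_neg fun h => hA.2 fun w hw => mem_nonNbrs.2 ⟨hA.1 hw, (isIndepFinset_insert.1 h).2 w hw⟩]
  · intro A hA
    rw [Finset.mem_powerset] at hA
    have hi : IsIndepFinset G (insert v A) ↔ IsIndepFinset G A :=
      isIndepFinset_insert.trans (and_iff_left fun w hw => (mem_nonNbrs.1 (hA hw)).2)
    rw [Finset.card_insert_of_notMem fun h => hv (nonNbrs_subset G v S (hA h))]
    simp only [hi]
    split_ifs <;> ring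

lemma indepEval_of_isIndepFinset (t : ℝ) {S : Finset V} (hS : IsIndepFinset G S) :
    indepEval G t S = (1 - t) ^ S.card := by
  classical
  induction S using Finset.induction_on with
  | empty => simp [indepEval_empty]
  | insert a S ha ih =>
    rw [isIndepFinset_insert] at hS
    rw [indepEval_insert _ _ ha, nonNbrs_eq_self hS.2, ih hS.1, Finset.card_insert_of_notMem ha]
    ring

lemma indepEval_singleton (G : SimpleGraph V) (t : ℝ) (v : V) : indepEval G t {v} = 1 - t := by
  have hv : IsIndepFinset G {v} := by simp [IsIndepFinset]
  rw [indepEval_of_isIndepFinset t hv, Finset.card_singleton, pow_one]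

lemma indepEval_congr {H : SimpleGraph V} {S : Finset V}
    (h : ∀ u ∈ S, ∀ v ∈ S, G.Adj u v ↔ H.Adj u v) : indepEval G t S = indepEval H t S := by
  classical
  refine Finset.sum_congr rfl fun A hA => ?_
  have hAS := Finset.mem_powerset.1 hA
  have : IsIndepFinset G A ↔ IsIndepFinset H A :=
    forall₄_congr fun u hu v hv => not_congr (h u (hAS hu) v (hAS hv))
  simp only [this]

lemma IndepPos.lt_one [Nonempty V] (h : IndepPos G t) : t < 1 := by
  obtain ⟨v⟩ := ‹Nonempty V›
  have := h {v}
  rw [indepEval_singleton] at this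
  linarith

lemma IndepPos.antitone (h : IndepPos G t) (ht : 0 ≤ t) : Antitone (indepEval G t) := by
  classical
  intro S T hST
  rw [← Finset.union_eq_right.2 hST]
  clear hST
  induction T using Finset.induction_on with
  | empty => simp
  | insert a U _ ih =>
    rw [Finset.union_insert]
    by_cases hm : a ∈ S ∪ U
    · rwa [Finset.insert_eq_of_mem hm]
    · rw [indepEval_insert _ _ hm]
      exact (sub_le_self _ (mul_nonneg ht (h _).le)).trans ih

lemma IndepPos.insert_le [DecidableEq V] (h : IndepPos G t) (ht : 0 ≤ t) {v : V} {S T : Finset V}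
    (hv : v ∉ S) (hT : nonNbrs G v S ⊆ T) :
    indepEval G t (insert v S) ≤ indepEval G t S - t * indepEval G t T := by
  rw [indepEval_insert _ _ hv]
  gcongr
  exact h.antitone ht hT

lemma IndepPos.le_mul_pow [DecidableEq V] (h : IndepPos G t) (ht : 0 ≤ t) {S U : Finset V}
    (hd : Disjoint S U) : indepEval G t (S ∪ U) ≤ indepEval G t S * (1 - t) ^ U.card := by
  induction U using Finset.induction_on with
  | empty => simp
  | insert a U ha ih =>
    have : Nonempty V := ⟨a⟩
    rw [Finset.disjoint_insert_right] at hd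
    have hm : a ∉ S ∪ U := by simp [hd.1, ha]
    rw [Finset.union_insert, Finset.card_insert_of_notMem ha]
    calc indepEval G t (insert a (S ∪ U))
        ≤ indepEval G t (S ∪ U) - t * indepEval G t (S ∪ U) :=
          h.insert_le ht hm (nonNbrs_subset G a _)
      _ = indepEval G t (S ∪ U) * (1 - t) := by ring
      _ ≤ indepEval G t S * (1 - t) ^ U.card * (1 - t) :=
          mul_le_mul_of_nonneg_right (ih hd.2) (sub_nonneg.2 h.lt_one.le)
      _ = indepEval G t S * (1 - t) ^ (U.card + 1) := by rw [pow_succ, mul_assoc]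

lemma IndepPos.le_pow (h : IndepPos G t) (ht : 0 ≤ t) (S : Finset V) :
    indepEval G t S ≤ (1 - t) ^ S.card := by
  classical
  simpa [indepEval_empty] using h.le_mul_pow ht (Finset.disjoint_empty_left S)

end IndepEval

/-! ### The largest root and the order `⪯` -/

section LargestRoot

variable {V W : Type*} [Fintype V] [Fintype W] {G : SimpleGraph V} {H : SimpleGraph W} {x : ℝ}

lemma eval_indepPoly_pos (G : SimpleGraph V) (hx : 0 ≤ x) : 0 < (indepPoly G).eval x := by
  classical
  rw [← neg_neg x, eval_indepPoly, indepEval]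
  refine Finset.sum_pos' (fun A _ => ?_) ⟨∅, by simp, by simp [IsIndepFinset]⟩
  split_ifs
  · simpa using pow_nonneg hx _
  · exact le_rfl

lemma neg_of_eval_indepPoly_eq_zero (h : (indepPoly G).eval x = 0) : x < 0 :=
  not_le.1 fun hx => (eval_indepPoly_pos G hx).ne' h

lemma bddAbove_roots_indepPoly (G : SimpleGraph V) :
    BddAbove {x : ℝ | (indepPoly G).eval x = 0} :=
  ⟨0, fun _ hx => (neg_of_eval_indepPoly_eq_zero hx).le⟩

lemma le_xi (h : (indepPoly G).eval x = 0) : x ≤ xi G := le_csSup (bddAbove_roots_indepPoly G) h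

lemma xi_nonpos (G : SimpleGraph V) : xi G ≤ 0 :=
  Real.sSup_nonpos fun _ hx => (neg_of_eval_indepPoly_eq_zero hx).le

lemma exists_root_ge_of_eval_nonpos (hx : x ≤ 0) (h : (indepPoly G).eval x ≤ 0) :
    ∃ y, x ≤ y ∧ (indepPoly G).eval y = 0 := by
  obtain ⟨y, hy, hy0⟩ := intermediate_value_Icc hx (indepPoly G).continuous.continuousOn
    ⟨h, (eval_indepPoly_pos G le_rfl).le⟩
  exact ⟨y, hy.1, hy0⟩

lemma indepEval_univ_nonpos_of_forall_lt {s : ℝ} (hs : 0 ≤ s) (hpos : ∀ r, 0 ≤ r → r < s →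
    IndepPos G r) {T : Finset V} (hT : indepEval G s T ≤ 0) :
    indepEval G s Finset.univ ≤ 0 := by
  have hs0 : s ≠ 0 := by
    rintro rfl
    rw [indepEval_zero] at hT
    linarith
  suffices s ∈ {r | indepEval G r Finset.univ ≤ indepEval G r T} from le_trans this hT
  refine closure_minimal (s := Set.Ico 0 s) (fun r hr => ?_)
    (isClosed_le (continuous_indepEval G _) (continuous_indepEval G T)) ?_
  · exact (hpos r hr.1 hr.2).antitone hr.1 (Finset.subset_univ T)
  · rw [closure_Ico hs0.symm]
    exact ⟨hs, le_rfl⟩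

/-- At the first zero of any induced subgraph, monotonicity forces the polynomial of the whole graph
to be nonpositive as well. -/
lemma indepPos_of_forall_eval_ne_zero (hx : x ≤ 0)
    (hroot : ∀ y, x ≤ y → (indepPoly G).eval y ≠ 0) : IndepPos G (-x) := by
  intro S
  by_contra! hS
  set bad : Set ℝ := Set.Icc 0 (-x) ∩ ⋃ T : Finset V, {s | indepEval G s T ≤ 0}
  have hcompact : IsCompact bad := isCompact_Icc.inter_right <| isClosed_iUnion_of_finite fun T =>
    isClosed_le (continuous_indepEval G T) continuous_const
  obtain ⟨s, ⟨⟨hs0, hsx⟩, hsT⟩, hmin⟩ :=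
    hcompact.exists_isLeast ⟨-x, ⟨by linarith, le_rfl⟩, Set.mem_iUnion.2 ⟨S, hS⟩⟩
  obtain ⟨T, hT⟩ := Set.mem_iUnion.1 hsT
  have hpos : ∀ r, 0 ≤ r → r < s → IndepPos G r := fun r hr0 hrs U => by
    by_contra! hU
    exact (hmin ⟨⟨hr0, hrs.le.trans hsx⟩, Set.mem_iUnion.2 ⟨U, hU⟩⟩).not_gt hrs
  have huniv := indepEval_univ_nonpos_of_forall_lt hs0 hpos hT
  rw [← eval_indepPoly] at huniv
  obtain ⟨y, hy, hy0⟩ := exists_root_ge_of_eval_nonpos (neg_nonpos.2 hs0) huniv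
  exact hroot y (by linarith) hy0

lemma indepPos_of_xi_lt (hx : xi G < x) (hx0 : x ≤ 0) : IndepPos G (-x) :=
  indepPos_of_forall_eval_ne_zero hx0 fun _ hy h => (le_xi h).not_gt (hx.trans_le hy)

variable [Nonempty V]

/-- Without roots, a one-vertex induced subgraph would be positive at `-1`. -/
lemma eval_xi (G : SimpleGraph V) : (indepPoly G).eval (xi G) = 0 := by
  have hne : {x : ℝ | (indepPoly G).eval x = 0}.Nonempty := by
    by_contra hcon
    have h := indepPos_of_forall_eval_ne_zero (G := G) (x := -1) (by norm_num)
      fun y _ h => hcon ⟨y, h⟩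
    linarith [h.lt_one]
  exact IsClosed.csSup_mem (isClosed_eq (indepPoly G).continuous continuous_const) hne
    (bddAbove_roots_indepPoly G)

lemma eval_le_eval_of_forall_indepPos {p q : ℝ[X]}
    (h : ∀ t, 0 ≤ t → IndepPos G t → p.eval (-t) ≤ q.eval (-t)) :
    ∀ x ∈ Set.Icc (xi G) 0, p.eval x ≤ q.eval x := by
  have hxi : xi G < 0 := neg_of_eval_indepPoly_eq_zero (eval_xi G)
  rw [← closure_Ioc hxi.ne]
  refine closure_minimal (fun x hx => ?_) (isClosed_le p.continuous q.continuous)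
  have := h (-x) (neg_nonneg.2 hx.2) (indepPos_of_xi_lt hx.1 hx.2)
  rwa [neg_neg] at this

lemma pre_of_forall_le (h : ∀ t, 0 ≤ t → IndepPos G t →
    (indepPoly G).eval (-t) ≤ (indepPoly H).eval (-t)) : Pre H G :=
  eval_le_eval_of_forall_indepPos h

lemma pre_of_forall_ge (h : ∀ t, 0 ≤ t → IndepPos G t →
    (indepPoly H).eval (-t) ≤ (indepPoly G).eval (-t)) : Pre G H := by
  have hle := eval_le_eval_of_forall_indepPos h
  have h0 : (indepPoly H).eval (xi G) ≤ 0 :=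
    (hle _ ⟨le_rfl, xi_nonpos G⟩).trans_eq (eval_xi G)
  obtain ⟨y, hy, hy0⟩ := exists_root_ge_of_eval_nonpos (xi_nonpos G) h0
  exact fun x hx => hle x ⟨(hy.trans (le_xi hy0)).trans hx.1, hx.2⟩

end LargestRoot

/-! ### Coronas -/

section Corona

variable {V W : Type*} {G : SimpleGraph V} {H : SimpleGraph W} {t : ℝ}

lemma corona_adj_inl_inl {v w : V} : (corona G).Adj (.inl v) (.inl w) ↔ G.Adj v w := by
  simp only [corona, fromRel_adj, ne_eq, Sum.inl.injEq, G.adj_comm w v, or_self]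
  exact and_iff_right_of_imp G.ne_of_adj

lemma corona_adj_inl_inr {v w : V} : (corona G).Adj (.inl v) (.inr w) ↔ v = w := by
  simp [corona]

lemma corona_adj_inr_inr {v w : V} : ¬ (corona G).Adj (.inr v) (.inr w) := by
  simp [corona]

/-- Each independent set `A` of `G` extends to the pendant vertices outside `A`, which turns
evaluation at `-t` into evaluation at `-t / (1 - t)`. -/
lemma indepEval_corona (ht : 1 - t ≠ 0) (S : Finset V) : ∀ T, S ⊆ T →
    indepEval (corona G) t (S.disjSum T) = (1 - t) ^ T.card * indepEval G (t / (1 - t)) S := by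
  classical
  induction S using Finset.strongInduction with
  | H S ih =>
    intro T hST
    rcases S.eq_empty_or_nonempty with rfl | ⟨v, hv⟩
    · rw [indepEval_empty, mul_one, indepEval_of_isIndepFinset, Finset.card_disjSum,
        Finset.card_empty, zero_add]
      simp [IsIndepFinset, Finset.empty_disjSum, corona_adj_inr_inr]
    · have hinsert : S.disjSum T = insert (.inl v) ((S.erase v).disjSum T) := by
        ext (a | a)
        · simp only [Finset.inl_mem_disjSum, Finset.mem_insert, Sum.inl.injEq, Finset.mem_erase]
          by_cases h : a = v <;> simp [h, hv]
        · simp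
      have hnonNbrs : nonNbrs (corona G) (.inl v) ((S.erase v).disjSum T) =
          (nonNbrs G v (S.erase v)).disjSum (T.erase v) := by
        ext (a | a)
        · simp [mem_nonNbrs, corona_adj_inl_inl]
        · simp [mem_nonNbrs, corona_adj_inl_inr, and_comm, eq_comm]
      have hlt : S.erase v ⊂ S := Finset.erase_ssubset hv
      have hsub := nonNbrs_subset G v (S.erase v)
      rw [hinsert, indepEval_insert _ _ (by simp), hnonNbrs, ih _ hlt T (hlt.subset.trans hST),
        ih _ (hsub.trans_ssubset hlt) _ (hsub.trans (Finset.erase_subset_erase v hST))]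
      nth_rewrite 3 [← Finset.insert_erase hv]
      rw [indepEval_insert _ _ (Finset.notMem_erase v S),
        ← Finset.card_erase_add_one (hST hv), pow_succ]
      field_simp

lemma IndepPos.of_corona [Finite V] [Nonempty V] (h : IndepPos (corona G) t) :
    IndepPos G (t / (1 - t)) := by
  have := Fintype.ofFinite V
  have hlt : 0 < 1 - t := sub_pos.2 h.lt_one
  intro S
  have hS := h (S.disjSum Finset.univ)
  rw [indepEval_corona hlt.ne' _ _ (Finset.subset_univ S)] at hS
  exact pos_of_mul_pos_right hS (pow_pos hlt _).le

variable [Fintype V] [Fintype W]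

lemma eval_indepPoly_corona (G : SimpleGraph V) (ht : 1 - t ≠ 0) :
    (indepPoly (corona G)).eval (-t) =
      (1 - t) ^ Fintype.card V * (indepPoly G).eval (-(t / (1 - t))) := by
  rw [eval_indepPoly, eval_indepPoly, ← Finset.univ_disjSum_univ,
    indepEval_corona ht _ _ (le_refl _), Finset.card_univ]

variable [Nonempty V]

lemma pre_corona_of_forall_le (hcard : Fintype.card W = Fintype.card V)
    (h : ∀ t, 0 ≤ t → IndepPos G t → (indepPoly G).eval (-t) ≤ (indepPoly H).eval (-t)) :
    Pre (corona H) (corona G) := by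
  refine pre_of_forall_le fun t ht hpos => ?_
  have hlt : 0 < 1 - t := sub_pos.2 hpos.lt_one
  rw [eval_indepPoly_corona G hlt.ne', eval_indepPoly_corona H hlt.ne', hcard]
  exact mul_le_mul_of_nonneg_left (h _ (div_nonneg ht hlt.le) hpos.of_corona) (pow_pos hlt _).le

lemma pre_corona_of_forall_ge (hcard : Fintype.card W = Fintype.card V)
    (h : ∀ t, 0 ≤ t → IndepPos G t → (indepPoly H).eval (-t) ≤ (indepPoly G).eval (-t)) :
    Pre (corona G) (corona H) := by
  refine pre_of_forall_ge fun t ht hpos => ?_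
  have hlt : 0 < 1 - t := sub_pos.2 hpos.lt_one
  rw [eval_indepPoly_corona G hlt.ne', eval_indepPoly_corona H hlt.ne', hcard]
  exact mul_le_mul_of_nonneg_left (h _ (div_nonneg ht hlt.le) hpos.of_corona) (pow_pos hlt _).le

end Corona

/-! ### Path and cycle sequences -/

/-- The independence polynomial of the path on `n` vertices, evaluated at `-t`. -/
noncomputable def pathSeq (t : ℝ) : ℕ → ℝ
  | 0 => 1
  | 1 => 1 - t
  | n + 2 => pathSeq t (n + 1) - t * pathSeq t n

/-- The independence polynomial of the cycle on `n + 2` vertices, evaluated at `-t`; the index is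
shifted because the recursion starts with the degenerate cycle `K₂`. -/
noncomputable def cycleSeq (t : ℝ) : ℕ → ℝ
  | 0 => 1 - 2 * t
  | 1 => 1 - 3 * t
  | n + 2 => cycleSeq t (n + 1) - t * cycleSeq t n

/-- The properties shared by `pathSeq t` and `cycleSeq t` from which the comparison of ratios of
consecutive terms is derived. -/
structure PathLike (t : ℝ) (s : ℕ → ℝ) : Prop where
  add_two (n : ℕ) : s (n + 2) = s (n + 1) - t * s n
  one_le : s 1 ≤ (1 - t) * s 0

lemma pathLike_pathSeq (t : ℝ) : PathLike t (pathSeq t) :=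
  ⟨fun _ => rfl, by simp [pathSeq]⟩

lemma pathLike_cycleSeq (t : ℝ) : PathLike t (cycleSeq t) :=
  ⟨fun _ => rfl, by simp only [cycleSeq]; nlinarith [sq_nonneg t]⟩

namespace PathLike

variable {t : ℝ} {s : ℕ → ℝ}

lemma add_add_two (hs : PathLike t s) (a d : ℕ) : s (a + d + 2) =
    pathSeq t (a + 1) * s d + pathSeq t a * s (d + 1) - pathSeq t a * s d := by
  induction a using Nat.twoStepInduction with
  | zero => rw [zero_add, hs.add_two]; simp only [pathSeq]; ring
  | one => rw [add_comm 1 d, hs.add_two, hs.add_two]; simp only [pathSeq]; ring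
  | more a ih₀ ih₁ =>
    rw [show a + 2 + d + 2 = (a + d + 2) + 2 by ring, hs.add_two,
      show a + d + 2 + 1 = a + 1 + d + 2 by ring, ih₀, ih₁]
    simp only [pathSeq]
    ring

lemma succ_le (hs : PathLike t s) (ht : 0 ≤ t) {k : ℕ} (hpos : ∀ j < k, 0 < s j) :
    s (k + 1) ≤ (1 - t) * s k := by
  induction k with
  | zero => exact hs.one_le
  | succ k ih =>
    have hk : s (k + 1) ≤ s k := by
      nlinarith [ih fun j hj => hpos j (by lia), mul_nonneg ht (hpos k (by lia)).le]
    rw [hs.add_two]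
    nlinarith

lemma succ_le_self (hs : PathLike t s) (ht : 0 ≤ t) {k : ℕ} (hpos : ∀ j ≤ k, 0 < s j) :
    s (k + 1) ≤ s k := by
  have h := hs.succ_le ht fun j hj => hpos j hj.le
  nlinarith [mul_nonneg ht (hpos k le_rfl).le]

lemma add_le_mul (hs : PathLike t s) (ht : 0 ≤ t) {a d : ℕ} (ha : ∀ j ≤ a, 0 < pathSeq t j)
    (hd : ∀ j ≤ d, 0 < s j) : s (a + d) ≤ pathSeq t a * s d := by
  match a with
  | 0 => simp [pathSeq]
  | 1 => simpa [pathSeq, add_comm] using hs.succ_le ht fun j hj => hd j hj.le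
  | a + 2 =>
    have := (pathLike_pathSeq t).succ_le_self ht fun j (hj : j ≤ a) => ha j (by lia)
    have hd₁ := hs.succ_le ht fun j hj => hd j hj.le
    have := ha (a + 1) (by lia)
    rw [show a + 2 + d = a + d + 2 by ring, hs.add_add_two, (pathLike_pathSeq t).add_two]
    nlinarith [mul_nonneg (sub_nonneg.2 hd₁) (ha a (by lia)).le]

/-- If a term were nonpositive between positive ones, the addition formula would make all later
terms in range nonpositive. -/
lemma pos_of_add_two_pos (hs : PathLike t s) (ht : 0 ≤ t) {a d : ℕ}
    (ha : ∀ j ≤ a + 1, 0 < pathSeq t j) (hd : ∀ j ≤ d + 1, 0 < s j) (hend : 0 < s (a + d + 2)) :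
    ∀ j ≤ a + d + 2, 0 < s j := by
  suffices hfill : ∀ i ≤ a + 1, 0 < s (d + 1 + i) by
    intro j hj
    rcases le_total j (d + 1) with h | h
    · exact hd j h
    · obtain ⟨i, rfl⟩ := Nat.exists_eq_add_of_le h
      exact hfill i (by lia)
  intro i
  induction i with
  | zero => exact fun _ => hd _ le_rfl
  | succ i ih =>
    intro hi
    obtain ⟨f, rfl⟩ : ∃ f, a = i + f := Nat.exists_eq_add_of_le (by lia)
    rcases f with _ | g
    · convert hend using 2
      lia
    by_contra! hneg
    have hpath := (pathLike_pathSeq t).succ_le_self ht fun j (hj : j ≤ g) => ha j (by lia)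
    have hadd := hs.add_add_two g (d + 1 + i)
    rw [show g + (d + 1 + i) + 2 = i + (g + 1) + d + 2 by ring] at hadd
    rw [← add_assoc] at hneg
    nlinarith [mul_nonneg (sub_nonneg.2 hpath) (ih (by lia)).le,
      mul_nonneg (ha g (by lia)).le (neg_nonneg.2 hneg)]

end PathLike

lemma cycleSeq_succ (t : ℝ) (k : ℕ) :
    cycleSeq t (k + 1) = pathSeq t (k + 2) - t * pathSeq t k := by
  induction k using Nat.twoStepInduction with
  | zero => simp only [cycleSeq, pathSeq]; ring
  | one => simp only [cycleSeq, pathSeq]; ring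
  | more k ih₀ ih₁ => rw [cycleSeq, ih₀, ih₁]; simp only [pathSeq]; ring

lemma cycleSeq_le_pathSeq {t : ℝ} (ht : 0 ≤ t) {k : ℕ} (hpos : ∀ j ≤ k, 0 < pathSeq t j) :
    cycleSeq t k ≤ pathSeq t (k + 2) := by
  match k with
  | 0 => simp only [cycleSeq, pathSeq]; nlinarith [sq_nonneg t]
  | k + 1 =>
    have hle := (pathLike_pathSeq t).succ_le_self ht fun j (hj : j ≤ k) => hpos j (by lia)
    rw [cycleSeq_succ, (pathLike_pathSeq t).add_two (k + 1)]
    gcongr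

lemma cycleSeq_pos_of_succ_pos {t : ℝ} (ht : 0 ≤ t) {k : ℕ} (hpath : ∀ j ≤ k, 0 < pathSeq t j)
    (hend : 0 < cycleSeq t (k + 1)) : ∀ j ≤ k + 1, 0 < cycleSeq t j := by
  have hthree : 0 < 1 - 3 * t := by
    match k with
    | 0 => exact hend
    | k + 1 =>
      have hadd := (pathLike_cycleSeq t).add_add_two k 0
      have hanti := (pathLike_pathSeq t).succ_le_self ht fun j (hj : j ≤ k) => hpath j (by lia)
      simp only [add_zero, zero_add] at hadd
      simp only [cycleSeq] at hadd hend
      have hle : 0 < pathSeq t (k + 1) * (1 - 3 * t) := by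
        nlinarith [mul_le_mul_of_nonneg_left hanti ht]
      exact pos_of_mul_pos_right hle (hpath (k + 1) le_rfl).le
  match k with
  | 0 => intro j hj; interval_cases j <;> simp only [cycleSeq] <;> linarith
  | k + 1 =>
    simpa using (pathLike_cycleSeq t).pos_of_add_two_pos ht (a := k) (d := 0) hpath
      (by intro j hj; interval_cases j <;> simp only [cycleSeq] <;> linarith) hend

/-! ### Log-submodularity and deletion ratios -/

section Ratio

variable {V : Type*} [DecidableEq V] {G : SimpleGraph V} {t : ℝ}

lemma IndepPos.insert_mul_le_of_submod (h : IndepPos G t) (ht : 0 ≤ t) {S T : Finset V} {v : V}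
    (hST : S ⊆ T) (hv : v ∉ T)
    (hsub : indepEval G t (S ∪ nonNbrs G v T) * indepEval G t (S ∩ nonNbrs G v T) ≤
      indepEval G t S * indepEval G t (nonNbrs G v T)) :
    indepEval G t (insert v T) * indepEval G t S ≤
      indepEval G t T * indepEval G t (insert v S) := by
  have hinter : S ∩ nonNbrs G v T = nonNbrs G v S := by
    ext w
    simp only [Finset.mem_inter, mem_nonNbrs]
    have := @hST w
    tauto
  have hanti := h.antitone ht (Finset.union_subset hST (nonNbrs_subset G v T))
  rw [hinter] at hsub
  rw [indepEval_insert G t hv, indepEval_insert G t (fun hvS => hv (hST hvS))]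
  have := mul_le_mul_of_nonneg_left
    ((mul_le_mul_of_nonneg_right hanti (h (nonNbrs G v S)).le).trans hsub) ht
  linarith

lemma IndepPos.submod (h : IndepPos G t) (ht : 0 ≤ t) (A B : Finset V) :
    indepEval G t (A ∪ B) * indepEval G t (A ∩ B) ≤ indepEval G t A * indepEval G t B := by
  induction hn : (A ∪ B).card using Nat.strong_induction_on generalizing A B with
  | h n ih =>
    by_cases hAB : A ⊆ B
    · rw [Finset.union_eq_right.2 hAB, Finset.inter_eq_left.2 hAB, mul_comm]
    obtain ⟨v, hvA, hvB⟩ := Finset.not_subset.1 hAB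
    set A' := A.erase v with hA'
    rw [← Finset.insert_erase hvA, ← hA'] at hn ⊢
    have hvU : v ∉ A' ∪ B := by simp [hA', hvB]
    rw [Finset.insert_union] at hn ⊢
    rw [Finset.card_insert_of_notMem hvU] at hn
    rw [Finset.insert_inter_of_notMem hvB]
    have hA'B := ih _ (by lia) A' B rfl
    have hsub : A' ∪ nonNbrs G v (A' ∪ B) ⊆ A' ∪ B :=
      Finset.union_subset Finset.subset_union_left (nonNbrs_subset _ _ _)
    have hv := h.insert_mul_le_of_submod ht Finset.subset_union_left hvU
      (ih _ ((Finset.card_le_card hsub).trans_lt (by lia)) A' (nonNbrs G v (A' ∪ B)) rfl)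
    refine le_of_mul_le_mul_right ?_ (h A')
    calc _ = indepEval G t (insert v (A' ∪ B)) * indepEval G t A' * indepEval G t (A' ∩ B) := by
          ring
      _ ≤ indepEval G t (A' ∪ B) * indepEval G t (insert v A') * indepEval G t (A' ∩ B) :=
          mul_le_mul_of_nonneg_right hv (h _).le
      _ = indepEval G t (insert v A') * (indepEval G t (A' ∪ B) * indepEval G t (A' ∩ B)) := by
          ring
      _ ≤ indepEval G t (insert v A') * (indepEval G t A' * indepEval G t B) :=
          mul_le_mul_of_nonneg_left hA'B (h _).le
      _ = _ := by ring

lemma IndepPos.union_div_union_le (h : IndepPos G t) (ht : 0 ≤ t) {C D C' D' : Finset V}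
    (hdisj : Disjoint C D) (hC : C' ⊆ C) (hD : D' ⊆ D) :
    indepEval G t (C ∪ D) / indepEval G t (C' ∪ D') ≤
      indepEval G t C / indepEval G t C' * (indepEval G t D / indepEval G t D') := by
  have hC₁ := h.submod ht C (C' ∪ D)
  have hD₁ := h.submod ht D (C' ∪ D')
  rw [← Finset.union_assoc, Finset.union_eq_left.2 hC, Finset.inter_union_distrib_left,
    Finset.inter_eq_right.2 hC, Finset.disjoint_iff_inter_eq_empty.1 hdisj,
    Finset.union_empty] at hC₁
  rw [Finset.union_left_comm, Finset.union_eq_left.2 hD, Finset.inter_union_distrib_left,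
    Finset.inter_eq_right.2 hD,
    Finset.disjoint_iff_inter_eq_empty.1 (hdisj.symm.mono_right hC), Finset.empty_union] at hD₁
  rw [div_mul_div_comm, div_le_div_iff₀ (h _) (mul_pos (h _) (h _))]
  nlinarith [mul_le_mul_of_nonneg_right hC₁ (h D').le, mul_le_mul_of_nonneg_left hD₁ (h C).le]

/-- The factor by which the independence polynomial at `-t` of the subgraph induced on `S` exceeds
that of the subgraph with `u` deleted. -/
noncomputable def delRatio (G : SimpleGraph V) (t : ℝ) (S : Finset V) (u : V) : ℝ :=
  indepEval G t S / indepEval G t (S.erase u)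

lemma IndepPos.delRatio_pos (h : IndepPos G t) (S : Finset V) (u : V) : 0 < delRatio G t S u :=
  div_pos (h _) (h _)

lemma IndepPos.delRatio_anti (h : IndepPos G t) (ht : 0 ≤ t) {S T : Finset V} {u : V}
    (hST : S ⊆ T) (hu : u ∈ S) : delRatio G t T u ≤ delRatio G t S u := by
  have hsub := h.submod ht (T.erase u) S
  have hunion : T.erase u ∪ S = T := by
    ext w
    have := @hST w
    by_cases hw : w = u <;> simp_all
  rw [hunion, Finset.erase_inter, Finset.inter_eq_right.2 hST] at hsub
  rw [delRatio, delRatio, div_le_div_iff₀ (h _) (h _)]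
  linarith

lemma IndepPos.delRatio_insert (h : IndepPos G t) {u : V} {S : Finset V} (hu : u ∉ S) :
    delRatio G t (insert u S) u = 1 - t * (indepEval G t (nonNbrs G u S) / indepEval G t S) := by
  rw [delRatio, Finset.erase_insert hu, indepEval_insert G t hu, sub_div, div_self (h S).ne',
    mul_div_assoc]

lemma IndepPos.delRatio_insert_le (h : IndepPos G t) (ht : 0 ≤ t) {u : V} {S T : Finset V}
    (hu : u ∉ S) (hT : nonNbrs G u S ⊆ T) :
    delRatio G t (insert u S) u ≤ 1 - t * (indepEval G t T / indepEval G t S) := by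
  rw [h.delRatio_insert hu]
  gcongr
  · exact (h S).le
  · exact h.antitone ht hT

lemma IndepPos.delRatio_union_le (h : IndepPos G t) (ht : 0 ≤ t) {C D : Finset V} {u w : V}
    (hdisj : Disjoint C D) (hu : u ∈ D) (huw : G.Adj u w) :
    delRatio G t (C ∪ D) u ≤ 1 - (1 - delRatio G t D u) / delRatio G t C w := by
  obtain ⟨E, huE, rfl⟩ : ∃ E, u ∉ E ∧ D = insert u E :=
    ⟨D.erase u, Finset.notMem_erase u D, (Finset.insert_erase hu).symm⟩
  have huCE : u ∉ C ∪ E := by simp [huE, Finset.disjoint_right.1 hdisj hu]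
  have hnonNbrs : nonNbrs G u (C ∪ E) ⊆ C.erase w ∪ nonNbrs G u E := fun x hx => by
    rw [mem_nonNbrs, Finset.mem_union] at hx
    rw [Finset.mem_union, Finset.mem_erase, mem_nonNbrs]
    rcases hx with ⟨hx | hx, hux⟩
    · exact .inl ⟨fun hxw => hux (hxw ▸ huw), hx⟩
    · exact .inr ⟨hx, hux⟩
  have hsplit := inv_anti₀ (div_pos (h _) (h _)) <|
    h.union_div_union_le ht (hdisj.mono_right (Finset.subset_insert u E))
      (Finset.erase_subset w C) (nonNbrs_subset G u E)
  rw [mul_inv, inv_div, inv_div, inv_div, ← inv_div (indepEval G t C), ← delRatio] at hsplit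
  calc delRatio G t (C ∪ insert u E) u
      ≤ 1 - t * (indepEval G t (C.erase w ∪ nonNbrs G u E) / indepEval G t (C ∪ E)) := by
        rw [Finset.union_insert]
        exact h.delRatio_insert_le ht huCE hnonNbrs
    _ ≤ 1 - t * ((delRatio G t C w)⁻¹ * (indepEval G t (nonNbrs G u E) / indepEval G t E)) := by
        gcongr
    _ = 1 - (1 - delRatio G t (insert u E) u) / delRatio G t C w := by
        rw [h.delRatio_insert huE]
        ring

/-- The comparison of `(S, u)` with the sequence `s`: its terms are positive up to `m + 1`, and
deleting `u` from `S` changes the polynomial at least as much as the step from `m + 1` to `m`. -/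
structure DelRatioLE (G : SimpleGraph V) (t : ℝ) (s : ℕ → ℝ) (m : ℕ) (S : Finset V) (u : V) :
    Prop where
  pos : ∀ j ≤ m + 1, 0 < s j
  le : delRatio G t S u ≤ s (m + 1) / s m

namespace DelRatioLE

variable {s r : ℕ → ℝ} {a d m : ℕ} {C D S : Finset V} {u w : V}

lemma indepEval_le (h : DelRatioLE G t s m S u) (hpos : IndepPos G t)
    (hle : indepEval G t (S.erase u) ≤ s m) : indepEval G t S ≤ s (m + 1) := by
  have hm := h.pos m (by lia)
  calc indepEval G t S = delRatio G t S u * indepEval G t (S.erase u) :=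
        (div_mul_cancel₀ _ (hpos _).ne').symm
    _ ≤ s (m + 1) / s m * s m :=
        mul_le_mul h.le hle (hpos _).le (div_pos (h.pos _ le_rfl) hm).le
    _ = s (m + 1) := div_mul_cancel₀ _ hm.ne'

lemma union_le (hC : DelRatioLE G t s a C w) (hD : DelRatioLE G t r d D u) (hpos : IndepPos G t)
    (ht : 0 ≤ t) (hr : PathLike t r) (hdisj : Disjoint C D) (hu : u ∈ D) (huw : G.Adj u w) :
    delRatio G t (C ∪ D) u ≤
      (s (a + 1) * r d + s a * r (d + 1) - s a * r d) / (s (a + 1) * r d) := by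
  have := hC.pos a (by lia)
  have := hC.pos (a + 1) le_rfl
  have hr₀ := hD.pos d (by lia)
  have hr₁ : r (d + 1) / r d ≤ 1 :=
    div_le_one_of_le₀ (hr.succ_le_self ht fun j hj => hD.pos j (by lia)) hr₀.le
  calc delRatio G t (C ∪ D) u ≤ 1 - (1 - delRatio G t D u) / delRatio G t C w :=
        hpos.delRatio_union_le ht hdisj hu huw
    _ ≤ 1 - (1 - r (d + 1) / r d) / (s (a + 1) / s a) :=
        sub_le_sub_left (div_le_div₀ (sub_nonneg.2 (hD.le.trans hr₁)) (sub_le_sub_left hD.le 1)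
          (hpos.delRatio_pos C w) hC.le) 1
    _ = _ := by
        field_simp
        ring

lemma path_union_le (hC : DelRatioLE G t (pathSeq t) a C w) (hD : DelRatioLE G t s d D u)
    (hpos : IndepPos G t) (ht : 0 ≤ t) (hs : PathLike t s) (hdisj : Disjoint C D) (hu : u ∈ D)
    (huw : G.Adj u w) :
    delRatio G t (C ∪ D) u ≤ s (a + d + 2) / (pathSeq t (a + 1) * s d) := by
  rw [hs.add_add_two]
  exact union_le hC hD hpos ht hs hdisj hu huw

lemma of_le_div (hs : PathLike t s) (hpos : IndepPos G t) (ht : 0 ≤ t)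
    (ha : ∀ j ≤ a + 1, 0 < pathSeq t j) (hd : ∀ j ≤ d + 1, 0 < s j) {c : ℝ} (hc : 0 < c)
    (hsub : s (a + d + 1) ≤ c) (hle : delRatio G t S u ≤ s (a + d + 2) / c) :
    DelRatioLE G t s (a + d + 1) S u := by
  have hend : 0 < s (a + d + 2) :=
    (div_pos_iff_of_pos_right hc).1 ((hpos.delRatio_pos S u).trans_le hle)
  have hfill := hs.pos_of_add_two_pos ht ha hd hend
  exact ⟨hfill, hle.trans (div_le_div_of_nonneg_left hend.le (hfill _ (by lia)) hsub)⟩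

lemma path_union (hC : DelRatioLE G t (pathSeq t) a C w) (hD : DelRatioLE G t s d D u)
    (hpos : IndepPos G t) (ht : 0 ≤ t) (hs : PathLike t s) (hdisj : Disjoint C D) (hu : u ∈ D)
    (huw : G.Adj u w) : DelRatioLE G t s (a + d + 1) (C ∪ D) u := by
  refine of_le_div hs hpos ht hC.pos hD.pos (mul_pos (hC.pos _ le_rfl) (hD.pos d (by lia))) ?_
    (path_union_le hC hD hpos ht hs hdisj hu huw)
  rw [show a + d + 1 = a + 1 + d by ring]
  exact hs.add_le_mul ht hC.pos fun j hj => hD.pos j (by lia)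

lemma union_path (hC : DelRatioLE G t s d C w) (hD : DelRatioLE G t (pathSeq t) a D u)
    (hpos : IndepPos G t) (ht : 0 ≤ t) (hs : PathLike t s) (hdisj : Disjoint C D) (hu : u ∈ D)
    (huw : G.Adj u w) : DelRatioLE G t s (a + d + 1) (C ∪ D) u := by
  refine of_le_div hs hpos ht hD.pos hC.pos (mul_pos (hC.pos _ le_rfl) (hD.pos a (by lia))) ?_
    ((union_le hC hD hpos ht (pathLike_pathSeq t) hdisj hu huw).trans_eq ?_)
  · rw [mul_comm, add_assoc]
    exact hs.add_le_mul ht (fun j hj => hD.pos j (by lia)) hC.pos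
  · rw [hs.add_add_two]
    ring

lemma singleton (hpos : IndepPos G t) (u : V) : DelRatioLE G t (pathSeq t) 0 {u} u := by
  have : Nonempty V := ⟨u⟩
  refine ⟨fun j hj => ?_, ?_⟩
  · interval_cases j
    · exact one_pos
    · exact sub_pos.2 hpos.lt_one
  · simp [delRatio, pathSeq, indepEval_empty, indepEval_singleton]

end DelRatioLE

end Ratio

/-! ### Connected vertex sets -/

section ConnectedSets

variable {V : Type*} {G : SimpleGraph V}

lemma exists_adj_of_ssubset {S Q : Finset V} (hS : (G.induce (S : Set V)).Connected)
    (hQ : Q.Nonempty) (hQS : Q ⊂ S) : ∃ v ∈ S, v ∉ Q ∧ ∃ w ∈ Q, G.Adj v w := by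
  obtain ⟨x, hx⟩ := hQ
  obtain ⟨y, hyS, hyQ⟩ := Finset.exists_of_ssubset hQS
  obtain ⟨p⟩ := hS ⟨x, hQS.1 hx⟩ ⟨y, hyS⟩
  obtain ⟨d, -, hfst, hsnd⟩ := p.exists_boundary_dart {z | z.1 ∈ Q} hx hyQ
  exact ⟨d.snd, d.snd.2, hsnd, d.fst, hfst, d.adj.symm⟩

lemma connected_induce_singleton (G : SimpleGraph V) (v : V) :
    (G.induce (({v} : Finset V) : Set V)).Connected := by
  rw [Finset.coe_singleton]
  exact .of_subsingleton

variable [DecidableEq V]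

lemma connected_induce_insert {S : Finset V} (hS : (G.induce (S : Set V)).Connected) {v w : V}
    (hw : w ∈ S) (hvw : G.Adj v w) : (G.induce ((insert v S : Finset V) : Set V)).Connected := by
  have := connected_induce_union (connected_induce_singleton G v).preconnected hS.preconnected
    (Finset.mem_coe.2 (Finset.mem_singleton_self v)) (Finset.mem_coe.2 hw) hvw
  rwa [← Finset.coe_union, ← Finset.insert_eq] at this

lemma connected_set_induction {S Q : Finset V} {P : Finset V → Prop}
    (hS : (G.induce (S : Set V)).Connected) (hQ : Q.Nonempty) (hQS : Q ⊆ S) (base : P Q)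
    (step : ∀ R v w, Q ⊆ R → v ∈ S → v ∉ R → w ∈ R → G.Adj v w → P R → P (insert v R)) :
    P S := by
  suffices ∀ R, Q ⊆ R → R ⊆ S → P R → P S from this Q subset_rfl hQS base
  intro R
  induction hk : (S \ R).card using Nat.strong_induction_on generalizing R with
  | h k ih =>
    intro hQR hRS hR
    obtain rfl | hlt := eq_or_ssubset_of_subset hRS
    · exact hR
    obtain ⟨v, hvS, hvR, w, hwR, hvw⟩ := exists_adj_of_ssubset hS (hQ.mono hQR) hlt
    have hcard : (S \ insert v R).card < k := by
      rw [Finset.sdiff_insert, ← hk]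
      exact Finset.card_erase_lt_of_mem (Finset.mem_sdiff.2 ⟨hvS, hvR⟩)
    exact ih _ hcard (insert v R) rfl (hQR.trans (Finset.subset_insert v R))
      (Finset.insert_subset hvS hRS) (step R v w hQR hvS hvR hwR hvw hR)

lemma exists_connected_split {S Q : Finset V} (hS : (G.induce (S : Set V)).Connected)
    (hQ : (G.induce (Q : Set V)).Connected) (hQS : Q ⊆ S) {u : V} (huS : u ∈ S) (huQ : u ∉ Q) :
    ∃ C D w, Disjoint C D ∧ C ∪ D = S ∧ Q ⊆ C ∧ w ∈ C ∧ u ∈ D ∧ G.Adj u w ∧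
      (G.induce (C : Set V)).Connected ∧ (G.induce (D : Set V)).Connected := by
  have hQne : Q.Nonempty := (Finset.nonempty_coe_sort).1 hQ.nonempty
  revert huS huQ
  refine connected_set_induction (P := fun R => (G.induce (R : Set V)).Connected ∧
    (u ∈ R → u ∉ Q → ∃ C D w, Disjoint C D ∧ C ∪ D = R ∧ Q ⊆ C ∧ w ∈ C ∧ u ∈ D ∧ G.Adj u w ∧
      (G.induce (C : Set V)).Connected ∧ (G.induce (D : Set V)).Connected)) hS hQne hQS
    ⟨hQ, fun h₁ h₂ => absurd h₁ h₂⟩ ?_ |>.2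
  rintro R v x hQR - hvR hxR hvx ⟨hR, hsplit⟩
  refine ⟨connected_induce_insert hR hxR hvx, fun hu huQ => ?_⟩
  rcases Finset.mem_insert.1 hu with rfl | huR
  · exact ⟨R, {u}, x, Finset.disjoint_singleton_right.2 hvR, by rw [Finset.union_comm]; rfl, hQR,
      hxR, Finset.mem_singleton_self u, hvx, hR, connected_induce_singleton G u⟩
  obtain ⟨C, D, w, hdisj, rfl, hQC, hwC, huD, huw, hC, hD⟩ := hsplit huR huQ
  rw [Finset.mem_union, not_or] at hvR
  rcases Finset.mem_union.1 hxR with hx | hx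
  · exact ⟨insert v C, D, w, Finset.disjoint_insert_left.2 ⟨hvR.2, hdisj⟩,
      Finset.insert_union v C D, hQC.trans (Finset.subset_insert v C), Finset.mem_insert_of_mem hwC,
      huD, huw, connected_induce_insert hC hx hvx, hD⟩
  · exact ⟨C, insert v D, w, Finset.disjoint_insert_right.2 ⟨hvR.1, hdisj⟩,
      Finset.union_insert v C D, hQC, hwC, Finset.mem_insert_of_mem huD, huw, hC,
      connected_induce_insert hD hx hvx⟩

end ConnectedSets

/-! ### Paths and cycles are extremal -/

section Extremal

variable {V : Type*} [DecidableEq V] {G : SimpleGraph V} {t : ℝ} {S T : Finset V} {u a b : V}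

lemma DelRatioLE.of_connected (h : IndepPos G t) (ht : 0 ≤ t)
    (hS : (G.induce (S : Set V)).Connected) (hu : u ∈ S) {m : ℕ} (hm : S.card = m + 1) :
    DelRatioLE G t (pathSeq t) m S u := by
  induction m using Nat.strong_induction_on generalizing S u with
  | h m ih =>
    by_cases hsub : S ⊆ {u}
    · obtain rfl := hsub.antisymm (Finset.singleton_subset_iff.2 hu)
      obtain rfl : m = 0 := by simpa using hm.symm
      exact .singleton h u
    obtain ⟨x, hxS, hxu⟩ := Finset.not_subset.1 hsub
    obtain ⟨C, D, w, hdisj, rfl, -, hwC, huD, huw, hC, hD⟩ := exists_connected_split hS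
      (connected_induce_singleton G x) (Finset.singleton_subset_iff.2 hxS) hu
      (by simpa [eq_comm] using hxu)
    obtain ⟨c, hc⟩ := Nat.exists_eq_succ_of_ne_zero (Finset.card_ne_zero_of_mem hwC)
    obtain ⟨d, hd⟩ := Nat.exists_eq_succ_of_ne_zero (Finset.card_ne_zero_of_mem huD)
    rw [Finset.card_union_of_disjoint hdisj] at hm
    obtain rfl : m = c + d + 1 := by lia
    exact .path_union (ih c (by lia) hC hwC hc) (ih d (by lia) hD huD hd) h ht
      (pathLike_pathSeq t) hdisj huD huw

omit [DecidableEq V] in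
lemma IndepPos.le_pathSeq (h : IndepPos G t) (ht : 0 ≤ t)
    (hS : (G.induce (S : Set V)).Connected) : indepEval G t S ≤ pathSeq t S.card := by
  classical
  obtain ⟨⟨x, hx⟩⟩ := hS.nonempty
  refine connected_set_induction (P := fun R => (G.induce (R : Set V)).Connected ∧
    indepEval G t R ≤ pathSeq t R.card) hS (Finset.singleton_nonempty x)
    (Finset.singleton_subset_iff.2 hx) ?_ ?_ |>.2
  · exact ⟨connected_induce_singleton G x, (indepEval_singleton G t x).le⟩
  · rintro R v w - - hvR hwR hvw ⟨hR, hle⟩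
    have hconn := connected_induce_insert hR hwR hvw
    have hcard := Finset.card_insert_of_notMem hvR
    rw [hcard]
    refine ⟨hconn, DelRatioLE.indepEval_le (.of_connected h ht hconn
      (Finset.mem_insert_self v R) hcard) h ?_⟩
    rwa [Finset.erase_insert hvR]

lemma IndepPos.div_erase_erase_le (h : IndepPos G t) (ht : 0 ≤ t)
    (hT : (G.induce (T : Set V)).Connected) (ha : a ∈ T) (hb : b ∈ T) (hab : a ≠ b) {k : ℕ}
    (hk : T.card = k + 2) :
    indepEval G t T / indepEval G t ((T.erase a).erase b) ≤ pathSeq t (k + 2) / pathSeq t k := by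
  obtain ⟨C, D, w, hdisj, rfl, hbC, hwC, haD, haw, hC, hD⟩ := exists_connected_split hT
    (connected_induce_singleton G b) (Finset.singleton_subset_iff.2 hb) ha (by simpa using hab)
  rw [Finset.singleton_subset_iff] at hbC
  obtain ⟨c, hc⟩ := Nat.exists_eq_succ_of_ne_zero (Finset.card_ne_zero_of_mem hwC)
  obtain ⟨d, hd⟩ := Nat.exists_eq_succ_of_ne_zero (Finset.card_ne_zero_of_mem haD)
  rw [Finset.card_union_of_disjoint hdisj] at hk
  obtain rfl : k = c + d := by lia
  have hCw := DelRatioLE.of_connected h ht hC hwC hc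
  have hCb := DelRatioLE.of_connected h ht hC hbC hc
  have hDa := DelRatioLE.of_connected h ht hD haD hd
  have hjoin := hCw.path_union_le hDa h ht (pathLike_pathSeq t) hdisj haD haw
  have hCsub : C ⊆ (C ∪ D).erase a := Finset.subset_erase.2
    ⟨Finset.subset_union_left, fun haC => Finset.disjoint_left.1 hdisj haC haD⟩
  have hpos₀ := hCw.pos c (by lia)
  have hpos₁ := hCw.pos (c + 1) le_rfl
  have hposd := hDa.pos d (by lia)
  have hend := (pathLike_pathSeq t).pos_of_add_two_pos ht hCw.pos hDa.pos <|
    (div_pos_iff_of_pos_right (mul_pos hpos₁ hposd)).1 ((h.delRatio_pos _ _).trans_le hjoin)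
  calc indepEval G t (C ∪ D) / indepEval G t (((C ∪ D).erase a).erase b)
      = delRatio G t (C ∪ D) a * delRatio G t ((C ∪ D).erase a) b :=
        (div_mul_div_cancel₀ (h _).ne').symm
    _ ≤ pathSeq t (c + d + 2) / (pathSeq t (c + 1) * pathSeq t d) *
          (pathSeq t (c + 1) / pathSeq t c) :=
        mul_le_mul hjoin ((h.delRatio_anti ht hCsub hbC).trans hCb.le) (h.delRatio_pos _ _).le
          ((h.delRatio_pos _ _).le.trans hjoin)
    _ = pathSeq t (c + d + 2) / (pathSeq t c * pathSeq t d) := by field_simp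
    _ ≤ pathSeq t (c + d + 2) / pathSeq t (c + d) :=
        div_le_div_of_nonneg_left (hend _ le_rfl).le (hend _ (by lia))
          ((pathLike_pathSeq t).add_le_mul ht (fun j hj => hCw.pos j (by lia))
            fun j hj => hDa.pos j (by lia))

lemma IndepPos.delRatio_insert_le_cycleSeq_div (h : IndepPos G t) (ht : 0 ≤ t)
    (hT : (G.induce (T : Set V)).Connected) (hu : u ∉ T) (ha : a ∈ T) (hb : b ∈ T) (hab : a ≠ b)
    (hua : G.Adj u a) (hub : G.Adj u b) {k : ℕ} (hk : T.card = k + 2) :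
    delRatio G t (insert u T) u ≤ cycleSeq t (k + 1) / pathSeq t (k + 2) := by
  have hTa := DelRatioLE.of_connected h ht hT ha hk
  have hsub : nonNbrs G u T ⊆ (T.erase a).erase b := fun x hx => by
    rw [mem_nonNbrs] at hx
    rw [Finset.mem_erase, Finset.mem_erase]
    exact ⟨fun hxb => hx.2 (hxb ▸ hub), fun hxa => hx.2 (hxa ▸ hua), hx.1⟩
  have hdiv := inv_anti₀ (div_pos (h _) (h _)) (h.div_erase_erase_le ht hT ha hb hab hk)
  rw [inv_div, inv_div] at hdiv
  calc delRatio G t (insert u T) u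
      ≤ 1 - t * (indepEval G t ((T.erase a).erase b) / indepEval G t T) :=
        h.delRatio_insert_le ht hu hsub
    _ ≤ 1 - t * (pathSeq t k / pathSeq t (k + 2)) := by gcongr
    _ = cycleSeq t (k + 1) / pathSeq t (k + 2) := by
        rw [cycleSeq_succ, sub_div, div_self (hTa.pos _ le_rfl).ne', mul_div_assoc]

lemma DelRatioLE.insert_of_connected (h : IndepPos G t) (ht : 0 ≤ t)
    (hT : (G.induce (T : Set V)).Connected) (hu : u ∉ T) (ha : a ∈ T) (hb : b ∈ T) (hab : a ≠ b)
    (hua : G.Adj u a) (hub : G.Adj u b) {k : ℕ} (hk : T.card = k + 2) :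
    DelRatioLE G t (cycleSeq t) k (insert u T) u := by
  have hpath := (DelRatioLE.of_connected h ht hT ha hk).pos
  have hle := h.delRatio_insert_le_cycleSeq_div ht hT hu ha hb hab hua hub hk
  have hend : 0 < cycleSeq t (k + 1) := (div_pos_iff_of_pos_right (hpath _ le_rfl)).1
    ((h.delRatio_pos _ _).trans_le hle)
  have hpos := cycleSeq_pos_of_succ_pos ht (fun j hj => hpath j (by lia)) hend
  exact ⟨hpos, hle.trans (div_le_div_of_nonneg_left hend.le (hpos k (by lia))
    (cycleSeq_le_pathSeq ht fun j hj => hpath j (by lia)))⟩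

/-- A set inducing a 2-connected subgraph: deleting any vertex leaves a connected set that contains
two of its neighbours. The vertex set of a cycle is the example that matters. -/
def IsTwoConnectedSet (G : SimpleGraph V) (F : Finset V) : Prop :=
  F.Nonempty ∧ ∀ u ∈ F, (G.induce (F.erase u : Set V)).Connected ∧
    ∃ a ∈ F.erase u, ∃ b ∈ F.erase u, a ≠ b ∧ G.Adj u a ∧ G.Adj u b

lemma erase_support_eq_of_isCycle {c : G.Walk u u} (hc : c.IsCycle) :
    c.support.toFinset.erase u = c.tail.dropLast.support.toFinset := by
  have hne : u ≠ c.snd := (c.adj_snd hc.not_nil).ne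
  have hnil : ¬ c.tail.Nil := fun h => hne h.eq.symm
  have hnodup := hc.isPath_tail.support_nodup
  have hsupp : c.support = u :: (c.tail.dropLast.support ++ [u]) := by
    rw [Walk.support_dropLast_concat hnil, Walk.cons_support_tail hc.not_nil]
  rw [← Walk.support_dropLast_concat hnil, List.nodup_append] at hnodup
  ext x
  have : x ∈ c.tail.dropLast.support → x ≠ u :=
    fun hx => hnodup.2.2 x hx u (List.mem_singleton_self u)
  simp only [hsupp, Finset.mem_erase, List.mem_toFinset, List.mem_cons, List.mem_append]
  tauto

lemma isTwoConnectedSet_support {c : G.Walk u u} (hc : c.IsCycle) :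
    IsTwoConnectedSet G c.support.toFinset := by
  refine ⟨⟨u, by simp⟩, fun v hv => ?_⟩
  rw [List.mem_toFinset] at hv
  obtain ⟨c', hc', hsupp⟩ : ∃ c' : G.Walk v v, c'.IsCycle ∧
      c.support.toFinset = c'.support.toFinset :=
    ⟨c.rotate v hv, hc.rotate hv, by ext; simp⟩
  have hsnd := c'.adj_snd hc'.not_nil
  have hpen := c'.adj_penultimate hc'.not_nil
  rw [hsupp]
  refine ⟨?_, c'.snd, ?_, c'.penultimate, ?_, hc'.snd_ne_penultimate, hsnd, hpen.symm⟩
  · rw [erase_support_eq_of_isCycle hc']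
    rw [List.coe_toFinset]
    exact c'.tail.dropLast.connected_induce_support
  · simp [hsnd.ne']
  · simp [hpen.ne]

namespace IsTwoConnectedSet

variable {F : Finset V}

lemma connected (hF : IsTwoConnectedSet G F) : (G.induce (F : Set V)).Connected := by
  obtain ⟨⟨u, hu⟩, h⟩ := hF
  obtain ⟨hconn, a, ha, -, -, -, hua, -⟩ := h u hu
  have := connected_induce_insert hconn ha hua
  rwa [Finset.insert_erase hu] at this

lemma three_le_card (hF : IsTwoConnectedSet G F) : 3 ≤ F.card := by
  obtain ⟨⟨u, hu⟩, h⟩ := hF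
  obtain ⟨-, a, ha, b, hb, hab, -⟩ := h u hu
  have := Finset.one_lt_card.2 ⟨a, ha, b, hb, hab⟩
  have := Finset.card_erase_add_one hu
  lia

lemma delRatioLE_insert (hF : IsTwoConnectedSet G F) (h : IndepPos G t) (ht : 0 ≤ t)
    (hu : u ∈ F) (hT : (G.induce (T : Set V)).Connected) (hFT : F.erase u ⊆ T) (huT : u ∉ T)
    {m : ℕ} (hm : T.card = m + 2) : DelRatioLE G t (cycleSeq t) m (insert u T) u := by
  obtain ⟨-, a, ha, b, hb, hab, hua, hub⟩ := hF.2 u hu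
  exact .insert_of_connected h ht hT huT (hFT ha) (hFT hb) hab hua hub hm

lemma exists_insert_or_branch (hF : IsTwoConnectedSet G F) (hFS : F ⊆ S)
    (hS : (G.induce (S : Set V)).Connected) (hu : u ∈ F) :
    (∃ T, u ∉ T ∧ F.erase u ⊆ T ∧ (G.induce (T : Set V)).Connected ∧ S = insert u T) ∨
      ∃ B T z, Disjoint B T ∧ S = B ∪ T ∧ F ⊆ T ∧ z ∈ B ∧ u ∈ T ∧ G.Adj u z ∧
        (G.induce (B : Set V)).Connected ∧ (G.induce (T : Set V)).Connected := by
  obtain ⟨C, D, w, hdisj, rfl, hFC, hwC, huD, huw, hC, hD⟩ := exists_connected_split hS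
    (hF.2 u hu).1 ((Finset.erase_subset u F).trans hFS) (hFS hu) (Finset.notMem_erase u F)
  by_cases hsub : D ⊆ {u}
  · obtain rfl := hsub.antisymm (Finset.singleton_subset_iff.2 huD)
    exact .inl ⟨C, Finset.disjoint_singleton_right.1 hdisj, hFC, hC, by
      rw [Finset.union_comm, ← Finset.insert_eq]⟩
  obtain ⟨x, hxD, hxu⟩ := Finset.not_subset.1 hsub
  obtain ⟨B, D', z, hdisj', rfl, -, hzB, huD', huz, hB, hD'⟩ := exists_connected_split hD
    (connected_induce_singleton G x) (Finset.singleton_subset_iff.2 hxD) huD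
    (by simpa [eq_comm] using hxu)
  rw [Finset.disjoint_union_right] at hdisj
  refine .inr ⟨B, C ∪ D', z, Finset.disjoint_union_right.2 ⟨hdisj.1.symm, hdisj'⟩,
    Finset.union_left_comm .., fun y hy => ?_, hzB, Finset.mem_union_right C huD', huz, hB, ?_⟩
  · by_cases hyu : y = u
    · exact Finset.mem_union_right _ (hyu ▸ huD')
    · exact Finset.mem_union_left _ (hFC (Finset.mem_erase.2 ⟨hyu, hy⟩))
  · rw [Finset.coe_union]
    exact connected_induce_union hC.preconnected hD'.preconnected hwC huD' huw.symm

/-- A branch hanging from the root `u` is split off when `u` lies in the 2-connected part; otherwise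
the part not containing the 2-connected set is split off together with `u`. -/
lemma delRatioLE (hF : IsTwoConnectedSet G F) (h : IndepPos G t) (ht : 0 ≤ t) (hFS : F ⊆ S)
    (hS : (G.induce (S : Set V)).Connected) (hu : u ∈ S) {m : ℕ} (hm : S.card = m + 3) :
    DelRatioLE G t (cycleSeq t) m S u := by
  induction m using Nat.strong_induction_on generalizing S u with
  | h m ih =>
    have hcard {C : Finset V} (hFC : F ⊆ C) : ∃ c, C.card = c + 3 :=
      Nat.exists_eq_add_of_le' (hF.three_le_card.trans (Finset.card_le_card hFC))
    by_cases huF : u ∈ F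
    · obtain ⟨T, huT, hFT, hT, rfl⟩ | ⟨B, T, z, hdisj, rfl, hFT, hzB, huT, huz, hB, hT⟩ :=
        hF.exists_insert_or_branch hFS hS huF
      · exact hF.delRatioLE_insert h ht huF hT hFT huT
          (by rw [Finset.card_insert_of_notMem huT] at hm; lia)
      · obtain ⟨b, hb⟩ := Nat.exists_eq_succ_of_ne_zero (Finset.card_ne_zero_of_mem hzB)
        obtain ⟨c, hc⟩ := hcard hFT
        rw [Finset.card_union_of_disjoint hdisj] at hm
        obtain rfl : m = b + c + 1 := by lia
        exact .path_union (.of_connected h ht hB hzB hb) (ih c (by lia) hFT hT huT hc) h ht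
          (pathLike_cycleSeq t) hdisj huT huz
    · obtain ⟨C, D, w, hdisj, rfl, hFC, hwC, huD, huw, hC, hD⟩ :=
        exists_connected_split hS hF.connected hFS hu huF
      obtain ⟨c, hc⟩ := hcard hFC
      obtain ⟨d, hd⟩ := Nat.exists_eq_succ_of_ne_zero (Finset.card_ne_zero_of_mem huD)
      rw [Finset.card_union_of_disjoint hdisj] at hm
      obtain rfl : m = d + c + 1 := by lia
      exact .union_path (ih c (by lia) hFC hC hwC hc) (.of_connected h ht hD huD hd) h ht
        (pathLike_cycleSeq t) hdisj huD huw

lemma indepEval_le (hF : IsTwoConnectedSet G F) (h : IndepPos G t) (ht : 0 ≤ t) {m : ℕ}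
    (hm : F.card = m + 3) : indepEval G t F ≤ cycleSeq t (m + 1) := by
  obtain ⟨u, hu⟩ := hF.1
  obtain ⟨hconn, a, ha, b, hb, hab, hua, hub⟩ := hF.2 u hu
  have hcard : (F.erase u).card = m + 2 := by
    have := Finset.card_erase_add_one hu
    lia
  have hratio := h.delRatio_insert_le_cycleSeq_div ht hconn (Finset.notMem_erase u F) ha hb hab
    hua hub hcard
  have hpath := h.le_pathSeq ht hconn
  rw [Finset.insert_erase hu] at hratio
  rw [hcard] at hpath
  have hpos : 0 < pathSeq t (m + 2) := (h _).trans_le hpath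
  calc indepEval G t F = delRatio G t F u * indepEval G t (F.erase u) :=
        (div_mul_cancel₀ _ (h _).ne').symm
    _ ≤ cycleSeq t (m + 1) / pathSeq t (m + 2) * pathSeq t (m + 2) :=
        mul_le_mul hratio hpath (h _).le ((h.delRatio_pos F u).le.trans hratio)
    _ = cycleSeq t (m + 1) := div_mul_cancel₀ _ hpos.ne'

lemma indepEval_le_of_subset (hF : IsTwoConnectedSet G F) (h : IndepPos G t) (ht : 0 ≤ t)
    (hFS : F ⊆ S) (hS : (G.induce (S : Set V)).Connected) {m : ℕ} (hm : S.card = m + 3) :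
    indepEval G t S ≤ cycleSeq t (m + 1) := by
  revert m hm
  refine connected_set_induction (P := fun R => (G.induce (R : Set V)).Connected ∧
    ∀ {m}, R.card = m + 3 → indepEval G t R ≤ cycleSeq t (m + 1)) hS hF.1 hFS
    ⟨hF.connected, hF.indepEval_le h ht⟩ ?_ |>.2
  rintro R v w hFR - hvR hwR hvw ⟨hR, hle⟩
  have hconn := connected_induce_insert hR hwR hvw
  refine ⟨hconn, fun {m} hm => DelRatioLE.indepEval_le
    (hF.delRatioLE h ht (hFR.trans (Finset.subset_insert v R)) hconn
      (Finset.mem_insert_self v R) hm) h ?_⟩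
  have hcard := hF.three_le_card.trans (Finset.card_le_card hFR)
  rw [Finset.card_insert_of_notMem hvR] at hm
  rw [Finset.erase_insert hvR]
  obtain ⟨k, rfl⟩ : ∃ k, m = k + 1 := Nat.exists_eq_add_of_le' (by lia)
  exact hle (by lia)

end IsTwoConnectedSet

omit [DecidableEq V] in
lemma IndepPos.eval_indepPoly_le_cycleSeq [Fintype V] (h : IndepPos G t) (ht : 0 ≤ t)
    (hG : G.Connected) (hcyc : ¬ G.IsAcyclic) {m : ℕ} (hm : Fintype.card V = m + 3) :
    (indepPoly G).eval (-t) ≤ cycleSeq t (m + 1) := by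
  classical
  obtain ⟨u, c, hc⟩ : ∃ u, ∃ c : G.Walk u u, c.IsCycle := by simpa [IsAcyclic] using hcyc
  have huniv : (G.induce ((Finset.univ : Finset V) : Set V)).Connected := by
    rw [Finset.coe_univ]
    exact (induceUnivIso G).connected_iff.2 hG
  rw [eval_indepPoly]
  exact (isTwoConnectedSet_support hc).indepEval_le_of_subset h ht (Finset.subset_univ _) huniv
    (Finset.card_univ.trans hm)

end Extremal

/-! ### A triangle with pendant vertices is extremal -/

open Classical in
/-- The number of edges of `G` with both ends in `S`. -/
noncomputable def edgeCount {V : Type*} (G : SimpleGraph V) (S : Finset V) : ℕ :=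
  (S.sym2.filter fun e => e ∈ G.edgeSet).card

section EdgeCount

variable {V : Type*} {G : SimpleGraph V} {S : Finset V} {t : ℝ}

lemma edgeCount_univ [Fintype V] (G : SimpleGraph V) :
    edgeCount G Finset.univ = G.edgeSet.ncard := by
  classical
  rw [edgeCount, Finset.sym2_univ, ← Set.ncard_coe_finset]
  simp

lemma edgeCount_insert [DecidableEq V] (G : SimpleGraph V) {v : V} (hv : v ∉ S) :
    edgeCount G (insert v S) + (nonNbrs G v S).card = edgeCount G S + S.card := by
  classical
  have hsplit : (insert v S).sym2.filter (· ∈ G.edgeSet) =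
      (S.filter (G.Adj v)).image (s(v, ·)) ∪ S.sym2.filter (· ∈ G.edgeSet) := by
    ext e
    simp only [Finset.sym2_insert, Finset.mem_filter, Finset.mem_union, Finset.mem_image,
      Finset.mem_insert, exists_eq_or_imp]
    constructor
    · rintro ⟨(rfl | ⟨w, hw, rfl⟩) | he, hG⟩
      · exact absurd hG G.irrefl
      · exact .inl ⟨w, ⟨hw, hG⟩, rfl⟩
      · exact .inr ⟨he, hG⟩
    · rintro (⟨w, ⟨hw, hG⟩, rfl⟩ | ⟨he, hG⟩)
      · exact ⟨.inl (.inr ⟨w, hw, rfl⟩), hG⟩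
      · exact ⟨.inr he, hG⟩
  have hdisj : Disjoint ((S.filter (G.Adj v)).image (s(v, ·)))
      (S.sym2.filter (· ∈ G.edgeSet)) := by
    simp only [Finset.disjoint_left, Finset.mem_image, Finset.mem_filter]
    rintro _ ⟨w, -, rfl⟩ ⟨hmem, -⟩
    exact hv (Finset.mk_mem_sym2_iff.1 hmem).1
  rw [edgeCount, hsplit, Finset.card_union_of_disjoint hdisj,
    Finset.card_image_of_injective _ fun _ _ => Sym2.congr_right.1, edgeCount, nonNbrs,
    ← S.card_filter_add_card_filter_not (G.Adj v)]
  ring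

lemma exists_adj_of_edgeCount_ne_zero (h : edgeCount G S ≠ 0) : ∃ a ∈ S, ∃ b ∈ S, G.Adj a b := by
  classical
  obtain ⟨⟨a, b⟩, he⟩ := Finset.card_ne_zero.1 h
  rw [Finset.mem_filter] at he
  have hS := Finset.mk_mem_sym2_iff.1 he.1
  exact ⟨a, hS.1, b, hS.2, he.2⟩

lemma exists_adj_erase_of_card_le_edgeCount [DecidableEq V] {w : V} (hw : w ∈ S)
    (h : S.card ≤ edgeCount G S) : ∃ a ∈ S.erase w, ∃ b ∈ S.erase w, G.Adj a b := by
  refine exists_adj_of_edgeCount_ne_zero fun h0 => ?_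
  have := edgeCount_insert G (Finset.notMem_erase w S)
  have := Finset.card_erase_lt_of_mem hw
  rw [Finset.insert_erase hw] at *
  lia

lemma IndepPos.le_of_adj (h : IndepPos G t) (ht : 0 ≤ t) {a b : V} (ha : a ∈ S)
    (hb : b ∈ S) (hab : G.Adj a b) :
    indepEval G t S ≤ (1 - 2 * t) * (1 - t) ^ (S.card - 2) := by
  classical
  have hpair : indepEval G t {a, b} = 1 - 2 * t := by
    have hempty : nonNbrs G a {b} = ∅ := by
      ext w
      simp only [mem_nonNbrs, Finset.mem_singleton, Finset.notMem_empty, iff_false]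
      rintro ⟨rfl, hw⟩
      exact hw hab
    rw [indepEval_insert _ _ (by simpa using hab.ne), hempty, indepEval_singleton, indepEval_empty]
    ring
  have hsub : {a, b} ⊆ S := Finset.insert_subset ha (Finset.singleton_subset_iff.2 hb)
  have := h.le_mul_pow ht (S := {a, b}) (U := S \ {a, b}) Finset.disjoint_sdiff
  rwa [Finset.union_sdiff_of_subset hsub, Finset.card_sdiff_of_subset hsub,
    Finset.card_pair hab.ne, hpair] at this

end EdgeCount

/-- The bounds by the polynomials of a star and of a triangle with pendant vertices for vertex sets
inducing a tree and a unicyclic graph, strengthened so as to allow growing `S` vertex by vertex. -/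
structure StarBounds {V : Type*} (G : SimpleGraph V) (t : ℝ) (S : Finset V) : Prop where
  card_le : S.card ≤ edgeCount G S + 1
  star_le {m : ℕ} : S.card = m + 1 → edgeCount G S = m → (1 - t) ^ m - t ≤ indepEval G t S
  triangle_le {m : ℕ} : S.card = m + 3 → edgeCount G S = m + 3 →
    (1 - 2 * t) * (1 - t) ^ m - t ≤ indepEval G t S

section StarBounds

variable {V : Type*} {G : SimpleGraph V} {S : Finset V} {t : ℝ}

lemma starBounds_singleton (G : SimpleGraph V) (t : ℝ) (v : V) : StarBounds G t {v} where
  card_le := by simp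
  star_le h _ := by
    obtain rfl : _ = 0 := by simpa using h.symm
    simp [indepEval_singleton]
  triangle_le h := by simp at h

namespace StarBounds

variable [DecidableEq V] {v w : V}

lemma star_le_insert (hS : StarBounds G t S) (h : IndepPos G t) (ht : 0 ≤ t) (hv : v ∉ S)
    (hlt : (nonNbrs G v S).card < S.card) {m : ℕ} (hm : (insert v S).card = m + 1)
    (he : edgeCount G (insert v S) = m) : (1 - t) ^ m - t ≤ indepEval G t (insert v S) := by
  have hedge := edgeCount_insert G hv
  have hcard := hS.card_le
  rw [Finset.card_insert_of_notMem hv] at hm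
  obtain ⟨k, rfl⟩ := Nat.exists_eq_add_one_of_ne_zero (show m ≠ 0 by lia)
  have hle := h.le_pow ht (nonNbrs G v S)
  rw [show (nonNbrs G v S).card = k by lia] at hle
  have := hS.star_le (m := k) (by lia) (by lia)
  rw [indepEval_insert _ _ hv, pow_succ]
  nlinarith

lemma triangle_le_insert (hS : StarBounds G t S) (h : IndepPos G t) (ht : 0 ≤ t) (hv : v ∉ S)
    (hw : w ∈ S) (hvw : G.Adj v w) {m : ℕ} (hm : (insert v S).card = m + 3)
    (he : edgeCount G (insert v S) = m + 3) :
    (1 - 2 * t) * (1 - t) ^ m - t ≤ indepEval G t (insert v S) := by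
  have hedge := edgeCount_insert G hv
  have hcard := hS.card_le
  have hsub := nonNbrs_subset_erase hvw S
  have hlt := (Finset.card_le_card hsub).trans_lt (Finset.card_erase_lt_of_mem hw)
  rw [Finset.card_insert_of_notMem hv] at hm
  rw [indepEval_insert _ _ hv]
  obtain hd | hd : (nonNbrs G v S).card = m ∨ (nonNbrs G v S).card = m + 1 := by lia
  · have hle := h.le_pow ht (nonNbrs G v S)
    rw [hd] at hle
    have := hS.star_le (m := m + 1) (by lia) (by lia)
    rw [pow_succ] at this
    nlinarith
  · obtain ⟨a, ha, b, hb, hab⟩ := exists_adj_erase_of_card_le_edgeCount hw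
      (show S.card ≤ edgeCount G S by lia)
    have hcard' := Finset.card_erase_of_mem hw
    have hpos := Finset.one_lt_card.2 ⟨a, ha, b, hb, hab.ne⟩
    obtain ⟨k, rfl⟩ := Nat.exists_eq_add_one_of_ne_zero (show m ≠ 0 by lia)
    have hle := h.le_of_adj ht ha hb hab
    rw [← Finset.eq_of_subset_of_card_le hsub (by lia), hd, show k + 1 + 1 - 2 = k by lia] at hle
    have := hS.triangle_le (m := k) (by lia) (by lia)
    rw [pow_succ]
    nlinarith

lemma insert (hS : StarBounds G t S) (h : IndepPos G t) (ht : 0 ≤ t) (hv : v ∉ S) (hw : w ∈ S)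
    (hvw : G.Adj v w) : StarBounds G t (insert v S) := by
  have hlt := (Finset.card_le_card (nonNbrs_subset_erase hvw S)).trans_lt
    (Finset.card_erase_lt_of_mem hw)
  refine ⟨?_, hS.star_le_insert h ht hv hlt, hS.triangle_le_insert h ht hv hw hvw⟩
  have := edgeCount_insert G hv
  have := hS.card_le
  rw [Finset.card_insert_of_notMem hv]
  lia

end StarBounds

lemma IndepPos.le_eval_indepPoly_of_unicyclic [Fintype V] (h : IndepPos G t) (ht : 0 ≤ t)
    (hG : Unicyclic G) {m : ℕ} (hm : Fintype.card V = m + 3) :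
    (1 - 2 * t) * (1 - t) ^ m - t ≤ (indepPoly G).eval (-t) := by
  classical
  obtain ⟨u⟩ := hG.1.nonempty
  have huniv : (G.induce ((Finset.univ : Finset V) : Set V)).Connected := by
    rw [Finset.coe_univ]
    exact (induceUnivIso G).connected_iff.2 hG.1
  have hbounds : StarBounds G t Finset.univ :=
    connected_set_induction huniv (Finset.singleton_nonempty u) (Finset.subset_univ _)
      (starBounds_singleton G t u) fun R v w _ _ hvR hwR hvw hR => hR.insert h ht hvR hwR hvw
  rw [eval_indepPoly]
  exact hbounds.triangle_le (Finset.card_univ.trans hm)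
    ((edgeCount_univ G).trans (hG.2.trans hm))

lemma Unicyclic.not_isAcyclic [Fintype V] (hG : Unicyclic G) : ¬ G.IsAcyclic := fun h => by
  classical
  have hcard := (IsTree.mk hG.1 h).card_edgeFinset
  rw [← hG.2, ← coe_edgeFinset, Set.ncard_coe_finset] at hcard
  lia

end StarBounds

/-! ### The polynomials of the extremal graphs -/

/-- The vertices `i` of an `n`-vertex graph with `a ≤ i < b`. -/
def arc (n a b : ℕ) : Finset (Fin n) := Finset.univ.filter fun i => a ≤ i.val ∧ i.val < b

section Evaluations

lemma mem_arc {n a b : ℕ} {i : Fin n} : i ∈ arc n a b ↔ a ≤ i.val ∧ i.val < b := by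
  simp [arc]

lemma arc_zero_self (n : ℕ) : arc n 0 n = Finset.univ := by
  ext i
  simp [mem_arc]

lemma arc_self (n a : ℕ) : arc n a a = ∅ := by
  ext i
  simp only [mem_arc, Finset.notMem_empty, iff_false]
  lia

lemma arc_succ {n a b : ℕ} (hab : a ≤ b) (hb : b < n) :
    arc n a (b + 1) = insert ⟨b, hb⟩ (arc n a b) := by
  ext i
  simp only [mem_arc, Finset.mem_insert, Fin.ext_iff]
  lia

lemma arc_eq_insert {n a b : ℕ} (hab : a < b) (ha : a < n) :
    arc n a b = insert ⟨a, ha⟩ (arc n (a + 1) b) := by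
  ext i
  simp only [mem_arc, Finset.mem_insert, Fin.ext_iff]
  lia

lemma card_arc {n a b : ℕ} (hb : b ≤ n) : (arc n a b).card = b - a := by
  have : (arc n a b).map Fin.valEmbedding = Finset.Ico a b := by
    ext x
    simp only [Finset.mem_map, mem_arc, Fin.valEmbedding_apply, Finset.mem_Ico]
    exact ⟨fun ⟨_, hi, h⟩ => h ▸ hi, fun hx => ⟨⟨x, by lia⟩, hx, rfl⟩⟩
  rw [← Finset.card_map Fin.valEmbedding, this, Nat.card_Ico]

lemma cycleGraph_adj_iff_val {m : ℕ} (u v : Fin (m + 3)) : (cycleGraph (m + 3)).Adj u v ↔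
    u.val = v.val + 1 ∨ v.val = u.val + 1 ∨ (u.val = 0 ∧ v.val = m + 2) ∨
      (v.val = 0 ∧ u.val = m + 2) := by
  rw [cycleGraph_adj', Fin.sub_def, Fin.sub_def]
  have hmod (a b : Fin (m + 3)) : (m + 3 - b.val + a.val) % (m + 3) =
      if b ≤ a then a.val - b.val else m + 3 - b.val + a.val := by
    split_ifs with h
    · rw [show m + 3 - b.val + a.val = a.val - b.val + (m + 3) by lia, Nat.add_mod_right,
        Nat.mod_eq_of_lt (by lia)]
    · exact Nat.mod_eq_of_lt (by lia)
  simp only [hmod]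
  split_ifs <;> lia

lemma indepEval_cycleGraph_arc {m : ℕ} (t : ℝ) (a : ℕ) : ∀ k, a + k ≤ m + 3 → k ≤ m + 2 →
    indepEval (cycleGraph (m + 3)) t (arc (m + 3) a (a + k)) = pathSeq t k
  | 0, _, _ => by rw [add_zero, arc_self, indepEval_empty, pathSeq]
  | 1, h, _ => by
    rw [arc_succ le_rfl (by lia), arc_self, insert_empty_eq, indepEval_singleton, pathSeq]
  | k + 2, h, hk => by
    have hnonNbrs : nonNbrs (cycleGraph (m + 3)) ⟨a + k + 1, by lia⟩
        (arc (m + 3) a (a + k + 1)) = arc (m + 3) a (a + k) := by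
      ext i
      simp only [mem_nonNbrs, cycleGraph_adj_iff_val, mem_arc]
      lia
    rw [← add_assoc, arc_succ (by lia) (by lia), indepEval_insert _ _ (by simp [mem_arc]), hnonNbrs,
      add_assoc, indepEval_cycleGraph_arc t a (k + 1) (by lia) (by lia),
      indepEval_cycleGraph_arc t a k (by lia) (by lia), pathSeq]

lemma eval_indepPoly_cycleGraph (m : ℕ) (t : ℝ) :
    (indepPoly (cycleGraph (m + 3))).eval (-t) = cycleSeq t (m + 1) := by
  have hnonNbrs : nonNbrs (cycleGraph (m + 3)) ⟨m + 2, by lia⟩ (arc (m + 3) 0 (m + 2)) =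
      arc (m + 3) 1 (1 + m) := by
    ext i
    simp only [mem_nonNbrs, cycleGraph_adj_iff_val, mem_arc]
    lia
  have hpath : indepEval (cycleGraph (m + 3)) t (arc (m + 3) 0 (m + 2)) = pathSeq t (m + 2) := by
    simpa using indepEval_cycleGraph_arc t 0 (m + 2) (by lia) le_rfl
  rw [eval_indepPoly, ← arc_zero_self, arc_succ (by lia) (by lia),
    indepEval_insert _ _ (by simp [mem_arc]), hnonNbrs, hpath,
    indepEval_cycleGraph_arc t 1 m (by lia) (by lia), cycleSeq_succ]

lemma Ugraph_adj {n : ℕ} (i j : Fin n) : (Ugraph n).Adj i j ↔ i.val ≠ j.val ∧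
    (i.val = 0 ∨ (i.val = 1 ∧ j.val = 2) ∨ j.val = 0 ∨ (j.val = 1 ∧ i.val = 2)) := by
  simp only [Ugraph, fromRel_adj, ne_eq, Fin.ext_iff]
  tauto

lemma isIndepFinset_Ugraph_arc {n a : ℕ} (ha : 2 ≤ a) (b : ℕ) :
    IsIndepFinset (Ugraph n) (arc n a b) := by
  intro i hi j hj
  rw [mem_arc] at hi hj
  rw [Ugraph_adj]
  lia

lemma eval_indepPoly_Ugraph (m : ℕ) (t : ℝ) :
    (indepPoly (Ugraph (m + 3))).eval (-t) = (1 - 2 * t) * (1 - t) ^ m - t := by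
  have hzero : nonNbrs (Ugraph (m + 3)) ⟨0, by lia⟩ (arc (m + 3) 1 (m + 3)) = ∅ := by
    ext i
    simp only [mem_nonNbrs, Ugraph_adj, mem_arc, Finset.notMem_empty]
    lia
  have hone : nonNbrs (Ugraph (m + 3)) ⟨1, by lia⟩ (arc (m + 3) 2 (m + 3)) =
      arc (m + 3) 3 (m + 3) := by
    ext i
    simp only [mem_nonNbrs, Ugraph_adj, mem_arc]
    lia
  rw [eval_indepPoly, ← arc_zero_self, arc_eq_insert (by lia) (by lia),
    indepEval_insert _ _ (by simp [mem_arc]), hzero, indepEval_empty,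
    arc_eq_insert (by lia) (by lia), indepEval_insert _ _ (by simp [mem_arc]), hone,
    indepEval_of_isIndepFinset t (isIndepFinset_Ugraph_arc le_rfl _),
    indepEval_of_isIndepFinset t (isIndepFinset_Ugraph_arc (by lia) _), card_arc le_rfl,
    card_arc le_rfl]
  simp only [Nat.reduceSubDiff, Nat.add_sub_cancel, pow_succ]
  ring

end Evaluations

/-! ### Matchings in well-covered graphs -/

section WellCovered

variable {V : Type*} {G : SimpleGraph V}

/-- A spanning tree is bipartite and misses a single edge, so its colour classes become independent
once an end of that edge is removed. -/
lemma Unicyclic.exists_isIndepFinset_card_le [Fintype V] (hG : Unicyclic G) :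
    ∃ A, IsIndepFinset G A ∧ Fintype.card V ≤ 2 * A.card + 1 := by
  classical
  obtain ⟨T, hTG, hT⟩ := hG.1.exists_isTree_le
  have hcard := Set.ncard_sdiff_add_ncard_of_subset (edgeSet_mono hTG)
  have hTcard := (isTree_iff_connected_and_card.1 hT).2
  rw [Nat.card_coe_set_eq, Nat.card_eq_fintype_card] at hTcard
  obtain ⟨⟨a, b⟩, he⟩ : ∃ e, G.edgeSet \ T.edgeSet = {e} :=
    Set.ncard_eq_one.1 (by rw [hG.2] at hcard; lia)
  let A (i : Fin 2) : Finset V := (Finset.univ.erase a).filter (hT.coloringTwo · = i)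
  have hA (i : Fin 2) : IsIndepFinset G (A i) := by
    intro u hu v hv huv
    simp only [A, Finset.mem_filter, Finset.mem_erase, Finset.mem_univ, and_true] at hu hv
    have huv' : s(u, v) ∈ G.edgeSet \ T.edgeSet :=
      ⟨huv, fun hTuv => hT.coloringTwo.valid hTuv (hu.2.trans hv.2.symm)⟩
    rw [he] at huv'
    rcases Sym2.eq_iff.1 huv' with ⟨rfl, -⟩ | ⟨-, rfl⟩
    exacts [hu.1 rfl, hv.1 rfl]
  have hsum : (Finset.univ.erase a).card = ∑ i, (A i).card :=
    Finset.card_eq_sum_card_fiberwise fun v _ => Finset.mem_univ (hT.coloringTwo v)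
  rw [Finset.card_erase_of_mem (Finset.mem_univ a), Finset.card_univ, Fin.sum_univ_two] at hsum
  obtain hle | hle := le_total (A 0).card (A 1).card
  · exact ⟨A 1, hA 1, by lia⟩
  · exact ⟨A 0, hA 0, by lia⟩

lemma WellCovered.card_eq_of_maximal (h : WellCovered G) {J K : Finset V}
    (hJ : Maximal (IsIndepFinset G) J) (hK : Maximal (IsIndepFinset G) K) : J.card = K.card := by
  classical
  exact h J K hJ.prop (fun _ hv => hJ.not_prop_of_gt (Finset.ssubset_insert hv))
    hK.prop (fun _ hv => hK.not_prop_of_gt (Finset.ssubset_insert hv))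

variable [Fintype V]

open Classical in
/-- The set of all vertices adjacent to a member of `X`. -/
noncomputable def nbhd (G : SimpleGraph V) (X : Finset V) : Finset V :=
  Finset.univ.filter fun w => ∃ x ∈ X, G.Adj x w

lemma mem_nbhd {X : Finset V} {w : V} : w ∈ nbhd G X ↔ ∃ x ∈ X, G.Adj x w := by
  simp [nbhd]

lemma IsIndepFinset.disjoint_nbhd {X : Finset V} (hX : IsIndepFinset G X) :
    Disjoint X (nbhd G X) := by
  refine Finset.disjoint_left.2 fun v hv hvX => ?_
  obtain ⟨x, hx, hxv⟩ := mem_nbhd.1 hvX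
  exact hX x hx v hv hxv

lemma WellCovered.card_sdiff_le_card_nbhd_inter [DecidableEq V] (h : WellCovered G)
    {J X : Finset V} (hJ : Maximal (IsIndepFinset G) J) (hX : IsIndepFinset G X) :
    (X \ J).card ≤ (nbhd G X ∩ J).card := by
  have hexch : IsIndepFinset G ((J \ nbhd G X) ∪ (X \ J)) := by
    intro a ha b hb hab
    rw [Finset.mem_union, Finset.mem_sdiff, Finset.mem_sdiff] at ha hb
    rcases ha with ha | ha <;> rcases hb with hb | hb
    · exact hJ.prop a ha.1 b hb.1 hab
    · exact ha.2 (mem_nbhd.2 ⟨b, hb.1, hab.symm⟩)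
    · exact hb.2 (mem_nbhd.2 ⟨a, ha.1, hab⟩)
    · exact hX a ha.1 b hb.1 hab
  obtain ⟨K, hle, hK⟩ := Finite.exists_le_maximal hexch
  have hcard := Finset.card_le_card hle
  rw [h.card_eq_of_maximal hK hJ, Finset.card_union_of_disjoint
    (Finset.disjoint_sdiff.mono_left Finset.sdiff_subset)] at hcard
  have hsplit := Finset.card_sdiff_add_card_inter J (nbhd G X)
  rw [Finset.inter_comm] at hsplit
  lia

lemma WellCovered.card_le_card_nbhd (h : WellCovered G) (hiso : ∀ v, ∃ w, G.Adj v w)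
    (X : Finset V) (hX : IsIndepFinset G X) : X.card ≤ (nbhd G X).card := by
  classical
  induction X using Finset.strongInduction with
  | H X ih =>
    rcases X.eq_empty_or_nonempty with rfl | ⟨x, hx⟩
    · exact Nat.zero_le _
    obtain ⟨y, hxy⟩ := hiso x
    obtain ⟨J, hyJ, hJ⟩ := Finite.exists_le_maximal (p := IsIndepFinset G) (a := {y})
      (by simp [IsIndepFinset])
    have hxJ : x ∉ J := fun hxJ => hJ.prop x hxJ y (Finset.singleton_subset_iff.1 hyJ) hxy
    have hssub : X ∩ J ⊂ X := Finset.ssubset_iff_subset_ne.2 ⟨Finset.inter_subset_left,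
      fun hXJ => hxJ (Finset.inter_eq_left.1 hXJ hx)⟩
    have hinter := ih _ hssub (hX.mono Finset.inter_subset_left)
    have hsub : nbhd G (X ∩ J) ⊆ nbhd G X \ J := fun a ha => by
      obtain ⟨b, hb, hba⟩ := mem_nbhd.1 ha
      rw [Finset.mem_inter] at hb
      exact Finset.mem_sdiff.2 ⟨mem_nbhd.2 ⟨b, hb.1, hba⟩, fun haJ => hJ.prop b hb.2 a haJ hba⟩
    calc X.card = (X \ J).card + (X ∩ J).card := (Finset.card_sdiff_add_card_inter X J).symm
      _ ≤ (nbhd G X ∩ J).card + (nbhd G X \ J).card :=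
          add_le_add (h.card_sdiff_le_card_nbhd_inter hJ hX)
            (hinter.trans (Finset.card_le_card hsub))
      _ = (nbhd G X).card := Finset.card_inter_add_card_sdiff _ _

lemma WellCovered.two_mul_card_le (h : WellCovered G) (hiso : ∀ v, ∃ w, G.Adj v w)
    {I : Finset V} (hI : IsIndepFinset G I) : 2 * I.card ≤ Fintype.card V := by
  classical
  have hcard := Finset.card_le_univ (I ∪ nbhd G I)
  rw [Finset.card_union_of_disjoint hI.disjoint_nbhd] at hcard
  have := h.card_le_card_nbhd hiso I hI
  lia

omit [Fintype V] in
lemma WellCovered.exists_injective_adj [Finite V] (h : WellCovered G) (hiso : ∀ v, ∃ w, G.Adj v w)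
    {A : Finset V} (hA : IsIndepFinset G A) :
    ∃ f : A → V, Function.Injective f ∧ ∀ a : A, G.Adj a (f a) := by
  classical
  have := Fintype.ofFinite V
  have hall (s : Finset A) : s.card ≤ (s.biUnion fun a => nbhd G {a.val}).card := by
    have hs : IsIndepFinset G (s.map (Function.Embedding.subtype _)) :=
      hA.mono (Finset.map_subtype_subset s)
    have hsub : nbhd G (s.map (Function.Embedding.subtype _)) =
        s.biUnion fun a => nbhd G {a.val} := by
      ext w
      simp [mem_nbhd]
    rw [← hsub, ← s.card_map (Function.Embedding.subtype _)]
    exact h.card_le_card_nbhd hiso _ hs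
  obtain ⟨f, hf, hfA⟩ := (Finset.all_card_le_biUnion_card_iff_exists_injective _).1 hall
  exact ⟨f, hf, fun a => by simpa [mem_nbhd] using hfA a⟩

lemma IsIndepFinset.exists_involutive_adj {A : Finset V} (hA : IsIndepFinset G A)
    (hcard : Fintype.card V = 2 * A.card) {f : A → V} (hf : Function.Injective f)
    (hadj : ∀ a : A, G.Adj a (f a)) : ∃ μ : V → V, Function.Involutive μ ∧ ∀ v, G.Adj v (μ v) := by
  classical
  let g : A → {v // v ∉ A} := fun a => ⟨f a, fun ha => hA a a.2 _ ha (hadj a)⟩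
  have hg : Function.Bijective g := by
    refine (Fintype.bijective_iff_injective_and_card g).2
      ⟨fun a b hab => hf (congrArg Subtype.val hab), ?_⟩
    rw [Fintype.card_subtype_compl, Fintype.card_coe]
    lia
  let e := Equiv.ofBijective g hg
  let p := Equiv.sumCompl (· ∈ A)
  refine ⟨fun v => p (Sum.elim (Sum.inr ∘ e) (Sum.inl ∘ e.symm) (p.symm v)), ?_, ?_⟩
  · intro v
    obtain ⟨a | b, rfl⟩ := p.surjective v <;> simp
  · intro v
    obtain ⟨a | b, rfl⟩ := p.surjective v
    · simp only [p.symm_apply_apply]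
      exact hadj a
    · obtain ⟨a, rfl⟩ := e.surjective b
      simp only [p.symm_apply_apply, Sum.elim_inr, Function.comp_apply, e.symm_apply_apply]
      exact (hadj a).symm

lemma IsIndepFinset.mem_or_mem_of_involutive {J : Finset V} (hJ : IsIndepFinset G J)
    (hcard : Fintype.card V = 2 * J.card) {μ : V → V} (hμ : Function.Involutive μ)
    (hadj : ∀ v, G.Adj v (μ v)) (v : V) : v ∈ J ∨ μ v ∈ J := by
  classical
  have hdisj : Disjoint J (J.image μ) := by
    refine Finset.disjoint_left.2 fun a ha hb => ?_
    obtain ⟨b, hbJ, rfl⟩ := Finset.mem_image.1 hb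
    exact hJ b hbJ _ ha (hadj b)
  have huniv : J ∪ J.image μ = Finset.univ := by
    refine Finset.eq_univ_of_card _ ?_
    rw [Finset.card_union_of_disjoint hdisj, Finset.card_image_of_injective _ hμ.injective, hcard]
    lia
  rcases Finset.mem_union.1 (huniv ▸ Finset.mem_univ v) with hv | hv
  · exact .inl hv
  · obtain ⟨b, hb, rfl⟩ := Finset.mem_image.1 hv
    exact .inr (by rwa [hμ])

/-- A perfect matching, encoded by the involution exchanging the two ends of each of its edges,
such that every neighbour of one end of a matching edge is adjacent to every neighbour of the other
end. This is the property by which Favaron characterised the well-covered graphs whose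
independence number is half the order. -/
structure IsFavaronMatching {V : Type*} (G : SimpleGraph V) (μ : V → V) : Prop where
  involutive : Function.Involutive μ
  adj : ∀ v, G.Adj v (μ v)
  adj_of_adj : ∀ {v w z}, G.Adj v w → G.Adj (μ v) z → G.Adj w z

/-- Two nonadjacent neighbours of the ends of a matching edge would extend to a maximal independent
set missing that edge. -/
lemma WellCovered.exists_isFavaronMatching (h : WellCovered G) (hiso : ∀ v, ∃ w, G.Adj v w)
    {A : Finset V} (hA : IsIndepFinset G A) (hcard : Fintype.card V = 2 * A.card) :
    ∃ μ, IsFavaronMatching G μ := by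
  classical
  obtain ⟨f, hf, hfadj⟩ := h.exists_injective_adj hiso hA
  obtain ⟨μ, hμ, hadj⟩ := hA.exists_involutive_adj hcard hf hfadj
  refine ⟨μ, hμ, hadj, fun {v w z} hw hz => ?_⟩
  by_contra hwz
  obtain ⟨J, hIJ, hJ⟩ := Finite.exists_le_maximal (p := IsIndepFinset G) (a := {w, z})
    (isIndepFinset_insert.2 ⟨by simp [IsIndepFinset], by simpa using hwz⟩)
  obtain ⟨K, hAK, hK⟩ := Finite.exists_le_maximal hA
  have hJcard : Fintype.card V = 2 * J.card := by
    refine le_antisymm ?_ (h.two_mul_card_le hiso hJ.prop)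
    rw [h.card_eq_of_maximal hJ hK, hcard]
    exact Nat.mul_le_mul_left 2 (Finset.card_le_card hAK)
  rcases hJ.prop.mem_or_mem_of_involutive hJcard hμ hadj v with hv | hv
  · exact hJ.prop _ hv _ (hIJ (by simp)) hw
  · exact hJ.prop _ hv _ (hIJ (by simp)) hz

end WellCovered

/-! ### Graphs with a pendant perfect matching -/

section PendantMatching

variable {V W : Type*} {G : SimpleGraph V} {H : SimpleGraph W}

lemma connected_of_forall_adj_reachable (hG : G.Connected) {f : V → W} (hf : f.Surjective)
    (h : ∀ u v, G.Adj u v → H.Reachable (f u) (f v)) : H.Connected := by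
  have := hG.nonempty.map f
  refine ⟨fun a b => ?_⟩
  obtain ⟨u, rfl⟩ := hf a
  obtain ⟨v, rfl⟩ := hf b
  obtain ⟨p⟩ := hG.preconnected u v
  induction p with
  | nil => exact Reachable.refl _
  | cons huv _ ih => exact (h _ _ huv).trans ih

lemma mem_of_forall_adj_mem (hG : G.Connected) {s : Set V} (hne : s.Nonempty)
    (hs : ∀ u ∈ s, ∀ v, G.Adj u v → v ∈ s) (v : V) : v ∈ s := by
  by_contra hv
  obtain ⟨u, hu⟩ := hne
  obtain ⟨p⟩ := hG.preconnected u v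
  obtain ⟨d, -, hfst, hsnd⟩ := p.exists_boundary_dart s hu hv
  exact hsnd (hs _ hfst _ d.adj)

lemma indepPoly_eq_of_iso [Fintype V] [Fintype W] (e : G ≃g H) : indepPoly G = indepPoly H := by
  classical
  refine Fintype.sum_equiv e.toEquiv.finsetCongr _ _ fun s => ?_
  have hindep : IsIndepFinset H (s.map e.toEquiv.toEmbedding) ↔ IsIndepFinset G s := by
    simp only [IsIndepFinset, Finset.forall_mem_map, Equiv.coe_toEmbedding, RelIso.coe_fn_toEquiv,
      e.map_adj_iff]
  simp only [Equiv.finsetCongr_apply, Finset.card_map, hindep]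

lemma Unicyclic.of_iso [Fintype V] [Fintype W] (hG : Unicyclic G) (e : G ≃g H) : Unicyclic H := by
  refine ⟨e.connected_iff.1 hG.1, ?_⟩
  rw [← Fintype.card_congr e.toEquiv, ← hG.2]
  exact (Nat.card_congr e.mapEdgeSet).symm

lemma edgeSet_corona (G : SimpleGraph V) : (corona G).edgeSet =
    Sym2.map Sum.inl '' G.edgeSet ∪ Set.range fun v => s(Sum.inl v, Sum.inr v) := by
  ext ⟨a, b⟩
  rcases a with a | a <;> rcases b with b | b
  · have hinl : s(.inl a, (.inl b : V ⊕ V)) ∈ Sym2.map .inl '' G.edgeSet ↔ s(a, b) ∈ G.edgeSet :=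
      (Sym2.map.injective Sum.inl_injective).mem_set_image (a := s(a, b))
    simp [hinl, corona_adj_inl_inl]
  · simp [Sym2.exists, corona_adj_inl_inr]
  · simp [Sym2.exists, (corona G).adj_comm, corona_adj_inl_inr]
  · simp [Sym2.exists, corona_adj_inr_inr]

lemma ncard_edgeSet_corona [Fintype V] (G : SimpleGraph V) :
    (corona G).edgeSet.ncard = G.edgeSet.ncard + Fintype.card V := by
  have hdisj : Disjoint (Sym2.map Sum.inl '' G.edgeSet)
      (Set.range fun v => s(Sum.inl v, Sum.inr v)) := by
    rw [Set.disjoint_left]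
    rintro _ ⟨e, -, rfl⟩ ⟨v, hv⟩
    have : Sum.inr v ∈ Sym2.map Sum.inl e := hv ▸ Sym2.mem_mk_right _ _
    simp at this
  have hinj : Function.Injective fun v : V => s(Sum.inl v, (Sum.inr v : V ⊕ V)) :=
    fun a b h => by simpa using h
  rw [edgeSet_corona, Set.ncard_union_eq hdisj (Set.toFinite _) (Set.toFinite _),
    Set.ncard_image_of_injective _ (Sym2.map.injective Sum.inl_injective), ← Set.image_univ,
    Set.ncard_image_of_injective _ hinj, Set.ncard_univ, Nat.card_eq_fintype_card]

lemma Unicyclic.of_corona [Fintype V] (h : Unicyclic (corona G)) : Unicyclic G := by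
  refine ⟨connected_of_forall_adj_reachable h.1 (f := Sum.elim id id) (fun v => ⟨.inl v, rfl⟩) ?_,
    ?_⟩
  · rintro (u | u) (v | v) huv
    · exact (corona_adj_inl_inl.1 huv).reachable
    · obtain rfl := corona_adj_inl_inr.1 huv
      exact Reachable.refl _
    · obtain rfl := corona_adj_inl_inr.1 huv.symm
      exact Reachable.refl _
    · exact absurd huv corona_adj_inr_inr
  · have hcard := h.2
    rw [ncard_edgeSet_corona, Fintype.card_sum] at hcard
    lia

variable {μ : V → V}

lemma nonempty_iso_corona_induce (hμ : Function.Involutive μ) (hadj : ∀ v, G.Adj v (μ v))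
    {K : Set V} (hK : ∀ v, μ v ∈ K ↔ v ∉ K) (hleaf : ∀ v ∉ K, ∀ w, G.Adj v w → w = μ v) :
    Nonempty (corona (G.induce K) ≃g G) := by
  let φ : K ⊕ K → V := Sum.elim Subtype.val fun v => μ v
  have hφ : Function.Bijective φ := by
    refine ⟨Function.Injective.sumElim Subtype.val_injective
      (hμ.injective.comp Subtype.val_injective) ?_, fun v => ?_⟩
    · rintro ⟨a, ha⟩ ⟨b, hb⟩ (rfl : a = μ b)
      exact (hK b).1 ha hb
    · by_cases hv : v ∈ K
      · exact ⟨.inl ⟨v, hv⟩, rfl⟩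
      · exact ⟨.inr ⟨μ v, (hK v).2 hv⟩, hμ v⟩
  have hout (v : K) : μ v ∉ K := fun h => (hK v).1 h v.2
  have hcross (a b : K) : G.Adj a (μ b) ↔ a = b := by
    refine ⟨fun h => ?_, by rintro rfl; exact hadj a⟩
    rw [Subtype.ext_iff, hleaf _ (hout b) _ h.symm, hμ]
  refine ⟨Equiv.ofBijective φ hφ, @fun a b => ?_⟩
  rcases a with a | a <;> rcases b with b | b
  · exact (corona_adj_inl_inl (G := G.induce K)).symm
  · exact (hcross a b).trans corona_adj_inl_inr.symm
  · rw [G.adj_comm, (corona _).adj_comm]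
    exact (hcross b a).trans corona_adj_inl_inr.symm
  · refine iff_of_false (fun h => hout b ?_) corona_adj_inr_inr
    have : μ b = μ (μ a) := hleaf _ (hout a) _ h
    rw [this, hμ]
    exact a.2

/-- The base of the corona consists of the vertices of degree at least two: connectivity excludes
matching edges both of whose ends are pendant. -/
lemma Unicyclic.exists_iso_corona.{u} {V : Type u} [Fintype V] {G : SimpleGraph V} {μ : V → V}
    (hG : Unicyclic G) (hV : 2 < Fintype.card V) (hμ : Function.Involutive μ)
    (hadj : ∀ v, G.Adj v (μ v))
    (hpend : ∀ v, (∀ w, G.Adj v w → w = μ v) ∨ ∀ w, G.Adj (μ v) w → w = v) :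
    ∃ (W : Type u) (_ : Fintype W) (H : SimpleGraph W),
      Unicyclic H ∧ Nonempty (corona H ≃g G) := by
  classical
  let K : Set V := {v | ¬ ∀ w, G.Adj v w → w = μ v}
  have hleaf : ∀ v ∉ K, ∀ w, G.Adj v w → w = μ v := fun v hv => not_not.1 hv
  have hK (v : V) : μ v ∈ K ↔ v ∉ K := by
    refine ⟨fun hv => not_not.2 ((hpend v).resolve_right (by simpa [K, hμ v] using hv)),
      fun hv hμv => ?_⟩
    rw [hμ] at hμv
    have hall := mem_of_forall_adj_mem hG.1 (s := {v, μ v}) ⟨v, .inl rfl⟩ (by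
      rintro u (rfl | rfl) w huw
      exacts [.inr (hleaf u hv w huw), .inl (hμv w huw)])
    have huniv : Finset.univ ⊆ {v, μ v} := fun u _ => by simpa using hall u
    exact hV.not_ge ((Finset.card_le_card huniv).trans Finset.card_le_two)
  obtain ⟨e⟩ := nonempty_iso_corona_induce hμ hadj hK hleaf
  exact ⟨K, inferInstance, G.induce K, (hG.of_iso e.symm).of_corona, ⟨e⟩⟩

end PendantMatching

/-! ### Matching edges on four-cycles -/

section FourCycle

variable {V : Type*} {G : SimpleGraph V} {t : ℝ}

/-- The graph obtained from `G` by replacing the edge `yz` by the edge `xz`. -/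
def moveEdge (G : SimpleGraph V) (x y z : V) : SimpleGraph V :=
  fromEdgeSet (insert s(x, z) (G.edgeSet \ {s(y, z)}))

lemma edgeSet_moveEdge {x y z : V} (hxz : x ≠ z) :
    (moveEdge G x y z).edgeSet = insert s(x, z) (G.edgeSet \ {s(y, z)}) := by
  rw [moveEdge, edgeSet_fromEdgeSet, sdiff_eq_left, Set.disjoint_left]
  rintro e (rfl | he) hdiag
  · exact hxz hdiag
  · exact G.not_isDiag_of_mem_edgeSet he.1 hdiag

lemma moveEdge_adj {x y z u v : V} (hxz : x ≠ z) : (moveEdge G x y z).Adj u v ↔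
    s(u, v) = s(x, z) ∨ G.Adj u v ∧ s(u, v) ≠ s(y, z) := by
  rw [← mem_edgeSet, edgeSet_moveEdge hxz]
  rfl

lemma unicyclic_moveEdge [Fintype V] (hG : Unicyclic G) {x y z : V} (hxy : G.Adj x y)
    (hyz : G.Adj y z) (hxz : x ≠ z) (hnadj : ¬ G.Adj x z) : Unicyclic (moveEdge G x y z) := by
  have hxy' : (moveEdge G x y z).Adj x y :=
    (moveEdge_adj hxz).2 (.inr ⟨hxy, by grind [Sym2.eq_iff]⟩)
  have hxz' : (moveEdge G x y z).Adj x z := (moveEdge_adj hxz).2 (.inl rfl)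
  refine ⟨connected_of_forall_adj_reachable hG.1 Function.surjective_id fun u v huv => ?_, ?_⟩
  · by_cases he : s(u, v) = s(y, z)
    · have hreach := hxy'.symm.reachable.trans hxz'.reachable
      rcases Sym2.eq_iff.1 he with ⟨rfl, rfl⟩ | ⟨rfl, rfl⟩
      exacts [hreach, hreach.symm]
    · exact ((moveEdge_adj hxz).2 (.inr ⟨huv, he⟩)).reachable
  · rw [edgeSet_moveEdge hxz,
      Set.ncard_exchange (s := G.edgeSet) (a := s(x, z)) (b := s(y, z)) hnadj hyz, hG.2]

/-- No independent set contains both ends of the edge `wz`. -/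
lemma indepEval_erase_add_indepEval_erase [DecidableEq V] {T : Finset V} {w z : V} (hz : z ∈ T)
    (hwz : G.Adj w z) : indepEval G t (T.erase z) + indepEval G t (T.erase w) =
      indepEval G t T + indepEval G t ((T.erase w).erase z) := by
  have hz' : z ∈ T.erase w := Finset.mem_erase.2 ⟨hwz.ne', hz⟩
  have hT := indepEval_insert G t (Finset.notMem_erase z T)
  have hTw := indepEval_insert G t (Finset.notMem_erase z (T.erase w))
  have hnbrs : nonNbrs G z (T.erase z) = nonNbrs G z ((T.erase w).erase z) := by
    ext y
    grind [mem_nonNbrs, G.adj_comm]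
  rw [Finset.insert_erase hz] at hT
  rw [Finset.insert_erase hz'] at hTw
  rw [hT, hTw, hnbrs]
  ring

/-- Both polynomials are expanded at `x` and `y`, and compared through inclusion–exclusion for the
edge `wz`. -/
lemma indepPoly_moveEdge [Fintype V] {x y w z : V} (hxz : x ≠ z) (hwz : G.Adj w z)
    (hx : ∀ v, G.Adj x v ↔ v = y ∨ v = w) (hy : ∀ v, G.Adj y v ↔ v = x ∨ v = z) :
    indepPoly (moveEdge G x y z) = indepPoly G := by
  classical
  have hxy : x ≠ y := ((hx y).2 (.inl rfl)).ne
  have hyz : y ≠ z := ((hy z).2 (.inr rfl)).ne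
  refine Polynomial.funext fun r => ?_
  obtain ⟨t, rfl⟩ : ∃ t, -t = r := ⟨-r, neg_neg r⟩
  obtain ⟨T, hT⟩ : ∃ T : Finset V, ∀ v, v ∈ T ↔ v ≠ x ∧ v ≠ y := ⟨{x, y}ᶜ, by simp⟩
  have huniv : (Finset.univ : Finset V) = insert x (insert y T) := by
    ext v
    grind
  have hyT : y ∉ T := fun h => ((hT y).1 h).2 rfl
  have hxT : x ∉ insert y T := by grind
  have hGx : nonNbrs G x (insert y T) = T.erase w := by
    ext v
    grind [mem_nonNbrs]
  have hGy : nonNbrs G y T = T.erase z := by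
    ext v
    grind [mem_nonNbrs]
  have hMx : nonNbrs (moveEdge G x y z) x (insert y T) = (T.erase w).erase z := by
    ext v
    grind [mem_nonNbrs, moveEdge_adj, Sym2.eq_iff]
  have hMy : nonNbrs (moveEdge G x y z) y T = T :=
    nonNbrs_eq_self fun v hv => by grind [moveEdge_adj, Sym2.eq_iff]
  have hcongr {S : Finset V} (hS : S ⊆ T) : indepEval (moveEdge G x y z) t S = indepEval G t S :=
    indepEval_congr fun u hu v hv => by
      have := hT u
      have := hT v
      grind [moveEdge_adj, Sym2.eq_iff]
  rw [eval_indepPoly, eval_indepPoly, huniv, indepEval_insert _ _ hxT, indepEval_insert _ _ hyT,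
    indepEval_insert _ _ hxT, indepEval_insert _ _ hyT, hGx, hGy, hMx, hMy, hcongr subset_rfl,
    hcongr ((Finset.erase_subset _ _).trans (Finset.erase_subset _ _))]
  have hpair := indepEval_erase_add_indepEval_erase (t := t) ((hT z).2 ⟨hxz.symm, hyz.symm⟩) hwz
  linear_combination t * hpair

lemma Unicyclic.eq_of_reachable_deleteEdges [Fintype V] (hG : Unicyclic G) {a b c d : V}
    (hab : G.Adj a b) (hcd : G.Adj c d)
    (hab' : (G.deleteEdges {s(a, b), s(c, d)}).Reachable a b)
    (hcd' : (G.deleteEdges {s(a, b), s(c, d)}).Reachable c d) : s(a, b) = s(c, d) := by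
  by_contra hne
  have hconn : (G.deleteEdges {s(a, b), s(c, d)}).Connected := by
    refine connected_of_forall_adj_reachable hG.1 Function.surjective_id fun u v huv => ?_
    by_cases huv' : (G.deleteEdges {s(a, b), s(c, d)}).Adj u v
    · exact huv'.reachable
    · have he : s(u, v) = s(a, b) ∨ s(u, v) = s(c, d) := by
        simpa [deleteEdges_adj, huv, or_iff_not_imp_left, -Sym2.eq] using huv'
      rcases he with he | he <;> rcases Sym2.eq_iff.1 he with ⟨rfl, rfl⟩ | ⟨rfl, rfl⟩
      exacts [hab', hab'.symm, hcd', hcd'.symm]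
  have hle := hconn.card_vert_le_card_edgeSet_add_one
  have hsub : {s(a, b), s(c, d)} ⊆ G.edgeSet := by
    rintro e (rfl | rfl)
    exacts [hab, hcd]
  have htwo := Set.ncard_le_ncard hsub
  rw [edgeSet_deleteEdges, Nat.card_coe_set_eq, Set.ncard_sdiff hsub, Set.ncard_pair hne, hG.2,
    Nat.card_eq_fintype_card] at hle
  rw [Set.ncard_pair hne, hG.2] at htwo
  lia

variable {μ : V → V} {v w w' x z z' : V}

/-- Neither end of the matching edge at `x` is pendant: `x` has the neighbour `w` and `μ x` has the
neighbour `z` outside the edge. For a Favaron matching, `x, w, z, μ x` is then a four-cycle. -/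
structure IsInnerEdge (G : SimpleGraph V) (μ : V → V) (x w z : V) : Prop where
  adj_left : G.Adj x w
  ne_left : w ≠ μ x
  adj_right : G.Adj (μ x) z
  ne_right : z ≠ x

namespace IsFavaronMatching

lemma symm (h : IsFavaronMatching G μ) (he : IsInnerEdge G μ x w z) :
    IsInnerEdge G μ (μ x) z w where
  adj_left := he.adj_right
  ne_left := by rw [h.involutive]; exact he.ne_right
  adj_right := by rw [h.involutive]; exact he.adj_left
  ne_right := he.ne_left

/-- Two such neighbours `z`, `v` would give two edges at `μ x` bypassed by the four-cycles through
`x` and `w`. -/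
lemma adj_map_iff [Fintype V] (h : IsFavaronMatching G μ) (hG : Unicyclic G)
    (he : IsInnerEdge G μ x w z) : G.Adj (μ x) v ↔ v = x ∨ v = z := by
  refine ⟨fun hv => or_iff_not_imp_left.2 fun hvx => ?_, ?_⟩
  · let G' := G.deleteEdges {s(μ x, v), s(μ x, z)}
    have hwz := h.adj_of_adj he.adj_left he.adj_right
    have hwv := h.adj_of_adj he.adj_left hv
    have hkeep {a b : V} (hab : G.Adj a b) (hv : s(a, b) ≠ s(μ x, v)) (hz : s(a, b) ≠ s(μ x, z)) :
        G'.Reachable a b :=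
      (deleteEdges_adj.2 ⟨hab, by rintro (h | h); exacts [hv h, hz h]⟩ : G'.Adj a b).reachable
    have hbypass : G'.Reachable (μ x) w :=
      (hkeep (h.adj x).symm (by grind) (by grind [he.ne_right])).trans
        (hkeep he.adj_left (by grind [he.ne_left, (h.adj x).ne])
          (by grind [he.ne_left, (h.adj x).ne]))
    have hout {u : V} (hu : G.Adj w u) (huμ : u ≠ μ x) : G'.Reachable w u :=
      hkeep hu (by grind [Sym2.eq_iff, he.ne_left]) (by grind [Sym2.eq_iff, he.ne_left])
    exact Sym2.congr_right.1 (hG.eq_of_reachable_deleteEdges hv he.adj_right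
      (hbypass.trans (hout hwv hv.ne'))
      (hbypass.trans (hout hwz he.adj_right.ne')))
  · rintro (rfl | rfl)
    exacts [(h.adj v).symm, he.adj_right]

lemma adj_iff [Fintype V] (h : IsFavaronMatching G μ) (hG : Unicyclic G)
    (he : IsInnerEdge G μ x w z) : G.Adj x v ↔ v = μ x ∨ v = w := by
  simpa only [h.involutive x] using h.adj_map_iff hG (h.symm he)

/-- Otherwise the four-cycle is closed under adjacency. -/
lemma map_ne [Fintype V] (h : IsFavaronMatching G μ) (hG : Unicyclic G) (hV : 4 < Fintype.card V)
    (he : IsInnerEdge G μ x w z) : μ w ≠ z := by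
  classical
  rintro rfl
  have he' : IsInnerEdge G μ w x (μ x) :=
    ⟨he.adj_left.symm, he.ne_right.symm, he.adj_right.symm, he.ne_left.symm⟩
  have hall := mem_of_forall_adj_mem hG.1 (s := {x, μ x, w, μ w}) ⟨x, by simp⟩ (by
    rintro u (rfl | rfl | rfl | rfl) v hv
    · rcases (h.adj_iff hG he).1 hv with rfl | rfl <;> simp
    · rcases (h.adj_map_iff hG he).1 hv with rfl | rfl <;> simp
    · rcases (h.adj_iff hG he').1 hv with rfl | rfl <;> simp
    · rcases (h.adj_map_iff hG he').1 hv with rfl | rfl <;> simp)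
  have huniv : Finset.univ ⊆ {x, μ x, w, μ w} := fun u _ => by simpa using hall u
  exact hV.not_ge ((Finset.card_le_card huniv).trans Finset.card_le_four)

/-- The remaining three edges of the four-cycle do not belong to the matching. -/
lemma reachable_deleteEdges [Fintype V] (h : IsFavaronMatching G μ) (hG : Unicyclic G)
    (hV : 4 < Fintype.card V) (he : IsInnerEdge G μ x w z) (a b : V) :
    (G.deleteEdges {s(a, μ a), s(b, μ b)}).Reachable x (μ x) := by
  have hkeep {u v : V} (huv : G.Adj u v) (hμ : μ u ≠ v) :
      (G.deleteEdges {s(a, μ a), s(b, μ b)}).Adj u v := by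
    refine deleteEdges_adj.2 ⟨huv, ?_⟩
    have ha := h.involutive a
    have hb := h.involutive b
    simp only [Set.mem_insert_iff, Set.mem_singleton_iff, Sym2.eq_iff]
    grind
  have hxw := hkeep he.adj_left he.ne_left.symm
  have hwz := hkeep (h.adj_of_adj he.adj_left he.adj_right) (h.map_ne hG hV he)
  have hzx := (hkeep he.adj_right (by rw [h.involutive]; exact he.ne_right.symm)).symm
  exact hxw.reachable.trans (hwz.reachable.trans hzx.reachable)

lemma eq_or_eq_map_of_isInnerEdge [Fintype V] (h : IsFavaronMatching G μ) (hG : Unicyclic G)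
    (hV : 4 < Fintype.card V) (he : IsInnerEdge G μ x w z) (he' : IsInnerEdge G μ v w' z') :
    v = x ∨ v = μ x := by
  have heq := hG.eq_of_reachable_deleteEdges (h.adj v) (h.adj x)
    (h.reachable_deleteEdges hG hV he' v x) (h.reachable_deleteEdges hG hV he v x)
  exact (Sym2.eq_iff.1 heq).imp And.left And.left

lemma moveEdge_adj_map (h : IsFavaronMatching G μ) (he : IsInnerEdge G μ x w z) (v : V) :
    (moveEdge G x (μ x) z).Adj v (μ v) := by
  refine (moveEdge_adj he.ne_right.symm).2 (.inr ⟨h.adj v, fun heq => ?_⟩)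
  rcases Sym2.eq_iff.1 heq with ⟨rfl, hz⟩ | ⟨rfl, hx⟩
  · exact he.ne_right (by rw [← hz, h.involutive])
  · exact he.ne_right (h.involutive.injective hx)

lemma eq_of_moveEdge_adj [Fintype V] (h : IsFavaronMatching G μ) (hG : Unicyclic G)
    (he : IsInnerEdge G μ x w z) (hv : (moveEdge G x (μ x) z).Adj (μ x) v) : v = x := by
  have hμx := (h.adj x).ne'
  rcases (moveEdge_adj he.ne_right.symm).1 hv with heq | ⟨hadj, hne⟩
  · grind [Sym2.eq_iff, he.adj_right.ne]
  · exact ((h.adj_map_iff hG he).1 hadj).resolve_right fun hvz => hne (by rw [hvz])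

lemma moveEdge_pendant (h : IsFavaronMatching G μ) (he : IsInnerEdge G μ x w z) (hvx : v ≠ x)
    (hv : ∀ u, G.Adj v u → u = μ v) : ∀ u, (moveEdge G x (μ x) z).Adj v u → u = μ v := by
  intro u hu
  rcases (moveEdge_adj he.ne_right.symm).1 hu with heq | ⟨hadj, -⟩
  · rcases Sym2.eq_iff.1 heq with ⟨rfl, -⟩ | ⟨rfl, -⟩
    · exact absurd rfl hvx
    · exact absurd (h.involutive.injective (hv _ he.adj_right.symm)).symm hvx
  · exact hv u hadj

lemma moveEdge_pendant_or_pendant [Fintype V] (h : IsFavaronMatching G μ) (hG : Unicyclic G)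
    (hV : 4 < Fintype.card V) (he : IsInnerEdge G μ x w z) (v : V) :
    (∀ u, (moveEdge G x (μ x) z).Adj v u → u = μ v) ∨
      ∀ u, (moveEdge G x (μ x) z).Adj (μ v) u → u = v := by
  by_cases hvx : v = x
  · subst hvx
    exact .inr fun u => h.eq_of_moveEdge_adj hG he
  by_cases hvμ : v = μ x
  · subst hvμ
    rw [h.involutive]
    exact .inl fun u => h.eq_of_moveEdge_adj hG he
  by_cases hv : ∀ u, G.Adj v u → u = μ v
  · exact .inl (h.moveEdge_pendant he hvx hv)
  by_cases hv' : ∀ u, G.Adj (μ v) u → u = v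
  · have hμv : μ v ≠ x := fun heq => hvμ (by rw [← heq, h.involutive])
    have := h.moveEdge_pendant he hμv (by rwa [h.involutive])
    rw [h.involutive] at this
    exact .inr this
  · push Not at hv hv'
    obtain ⟨w', hw', hne⟩ := hv
    obtain ⟨z', hz', hne'⟩ := hv'
    exact ((h.eq_or_eq_map_of_isInnerEdge hG hV he ⟨hw', hne, hz', hne'⟩).elim hvx hvμ).elim

lemma exists_unicyclic_pendant [Fintype V] (h : IsFavaronMatching G μ) (hG : Unicyclic G)
    (hV : 4 < Fintype.card V) : ∃ H : SimpleGraph V, Unicyclic H ∧ indepPoly H = indepPoly G ∧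
      (∀ v, H.Adj v (μ v)) ∧ ∀ v, (∀ u, H.Adj v u → u = μ v) ∨ ∀ u, H.Adj (μ v) u → u = v := by
  by_cases hpend : ∀ v, (∀ u, G.Adj v u → u = μ v) ∨ ∀ u, G.Adj (μ v) u → u = v
  · exact ⟨G, hG, rfl, h.adj, hpend⟩
  push Not at hpend
  obtain ⟨x, ⟨w, hxw, hw⟩, z, hz, hzx⟩ := hpend
  have he : IsInnerEdge G μ x w z := ⟨hxw, hw, hz, hzx⟩
  have hwz : G.Adj w z := h.adj_of_adj hxw hz
  have hxz : ¬ G.Adj x z := fun hxz =>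
    ((h.adj_iff hG he).1 hxz).elim hz.ne' hwz.ne'
  exact ⟨moveEdge G x (μ x) z, unicyclic_moveEdge hG (h.adj x) hz hzx.symm hxz,
    indepPoly_moveEdge hzx.symm hwz (fun _ => h.adj_iff hG he) (fun _ => h.adj_map_iff hG he),
    h.moveEdge_adj_map he, h.moveEdge_pendant_or_pendant hG hV he⟩

end IsFavaronMatching

end FourCycle

lemma Unicyclic.exists_isFavaronMatching {V : Type*} [Fintype V] {G : SimpleGraph V}
    (hG : Unicyclic G) (hwc : WellCovered G) (hcard : Even (Fintype.card V)) :
    ∃ μ, IsFavaronMatching G μ := by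
  have := hG.1.nonempty
  have := Fintype.one_lt_card_iff_nontrivial.1
    (by grind [Fintype.card_pos (α := V)] : 1 < Fintype.card V)
  have hiso (v : V) : ∃ w, G.Adj v w := hG.1.preconnected.exists_adj_of_nontrivial v
  obtain ⟨A, hA, hle⟩ := hG.exists_isIndepFinset_card_le
  have hge := hwc.two_mul_card_le hiso hA
  exact hwc.exists_isFavaronMatching hiso hA (by grind)

lemma Unicyclic.exists_corona_of_wellCovered.{u} {V : Type u} [Fintype V] {G : SimpleGraph V}
    (hG : Unicyclic G) (hwc : WellCovered G) {n : ℕ} (hn : 3 ≤ n)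
    (hcard : Fintype.card V = 2 * n) : ∃ (W : Type u) (_ : Fintype W) (H : SimpleGraph W),
      Unicyclic H ∧ Fintype.card W = n ∧ indepPoly (corona H) = indepPoly G := by
  obtain ⟨μ, hμ⟩ := hG.exists_isFavaronMatching hwc ⟨n, by lia⟩
  obtain ⟨G', hG', hpoly, hadj, hpend⟩ := hμ.exists_unicyclic_pendant hG (by lia)
  obtain ⟨W, _, H, hH, ⟨e⟩⟩ := hG'.exists_iso_corona (by lia) hμ.involutive hadj hpend
  have hW : Fintype.card W + Fintype.card W = Fintype.card V := by
    rw [← Fintype.card_sum, Fintype.card_congr e.toEquiv]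
  exact ⟨W, _, H, hH, by lia, (indepPoly_eq_of_iso e).trans hpoly⟩

lemma pre_congr {V W V' W' : Type*} [Fintype V] [Fintype W] [Fintype V'] [Fintype W']
    {G : SimpleGraph V} {H : SimpleGraph W} {G' : SimpleGraph V'} {H' : SimpleGraph W'}
    (hH : indepPoly H = indepPoly H') (hG : indepPoly G = indepPoly G') : Pre H G ↔ Pre H' G' := by
  rw [Pre, Pre, xi, xi, hH, hG]

/-- If `G` is a connected well-covered unicyclic graph of order `2n` (`n ≥ 3`),
then `C_n* ⪯ G` and `G ⪯ U_n*`. -/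
theorem stmt8 {V : Type*} [Fintype V] (n : ℕ) (hn : 3 ≤ n) (G : SimpleGraph V)
    (hcard : Fintype.card V = 2 * n) (hG : Unicyclic G) (hwc : WellCovered G) :
    Pre (corona (cycleGraph n)) G ∧ Pre G (corona (Ugraph n)) := by
  obtain ⟨W, _, H, hH, hW, hpoly⟩ := hG.exists_corona_of_wellCovered hwc hn hcard
  obtain ⟨m, rfl⟩ : ∃ m, n = m + 3 := Nat.exists_eq_add_of_le' hn
  have := hH.1.nonempty
  rw [pre_congr rfl hpoly.symm, pre_congr hpoly.symm rfl]
  refine ⟨pre_corona_of_forall_le (by simp [hW]) fun t ht hpos => ?_,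
    pre_corona_of_forall_ge (by simp [hW]) fun t ht hpos => ?_⟩
  · rw [eval_indepPoly_cycleGraph]
    exact hpos.eval_indepPoly_le_cycleSeq ht hH.1 hH.not_isAcyclic hW
  · rw [eval_indepPoly_Ugraph]
    exact hpos.le_eval_indepPoly_of_unicyclic ht hH hW
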